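/- In the standing setup, assume additionally that diam(X^t) < 1 for all t. Let φ^t : 𝔻 → U^t ∪ {∞} be the normalized Riemann map, and let (L^t)_{t∈[0,1]} be a family of arcs such that 0 is an endpoint of each L^t, L^t ∩ X^t = {0}, and t ↦ L^t is continuous with respect to the Hausdorff metric on compact subsets of ℂ. Then for each t the set cl((φ^t)⁻¹(L^t \ {0})) ∩ ∂𝔻 consists of a single point e^{iα(t)}; the function t ↦ e^{iα(t)} from [0,1] to ∂𝔻 is continuous; and for each t the conformal external ray R^t_{α(t)} lands on 0. -/

import Mathlib

open Set Metric Topology Filter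

/-- The union of the unbounded connected components of the complement of `K`;
for compact `K` this is the (unique) unbounded component of `ℂ \ K`. -/
def unbddComp (K : Set ℂ) : Set ℂ :=
  {z : ℂ | z ∈ Kᶜ ∧ ¬ Bornology.IsBounded (connectedComponentIn Kᶜ z)}

/-- `X^t = ℂ \ U^t`, where `U^t` is the unbounded component of `ℂ \ h^t(Bd X)`. -/
def XtSet (h : ℂ → ℝ → ℂ) (X : Set ℂ) (t : ℝ) : Set ℂ :=
  (unbddComp ((fun z => h z t) '' frontier X))ᶜ

/-- An arc with endpoints `a` and `b`: a homeomorphic image of `[0,1]`. -/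
def IsArcEnds (A : Set ℂ) (a b : ℂ) : Prop :=
  ∃ γ : ℝ → ℂ, ContinuousOn γ (Set.Icc 0 1) ∧ Set.InjOn γ (Set.Icc 0 1) ∧
    γ '' Set.Icc 0 1 = A ∧ γ 0 = a ∧ γ 1 = b

/-- The normalized Riemann map `φ : 𝔻 → U ∪ {∞}`, `φ(0) = ∞`, encoded by its finite
part `f` on the punctured disk: `f` is an injective holomorphic map of `𝔻 \ {0}` onto
`U`, with a simple pole at `0` with positive "derivative": `z·f(z) → c > 0` as `z → 0`. -/
def IsNormalizedRiemannMap (U : Set ℂ) (f : ℂ → ℂ) : Prop :=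
  DifferentiableOn ℂ f (Metric.ball 0 1 \ {0}) ∧
  Set.InjOn f (Metric.ball 0 1 \ {0}) ∧
  f '' (Metric.ball 0 1 \ {0}) = U ∧
  ∃ c : ℝ, 0 < c ∧ Filter.Tendsto (fun z : ℂ => z * f z) (𝓝[≠] 0) (𝓝 (c : ℂ))


/-- An injective holomorphic map on an open connected set has open image and holomorphic inverse. -/
theorem inv_holo {f : ℂ → ℂ} {U : Set ℂ} (hU : IsOpen U)
    (hf : DifferentiableOn ℂ f U) (hi : InjOn f U) :
    IsOpen (f '' U) ∧ ∃ g : ℂ → ℂ, (∀ z ∈ U, g (f z) = z) ∧ DifferentiableOn ℂ g (f '' U) := by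
  have han : AnalyticOnNhd ℂ f U := hf.analyticOnNhd hU
  have hnc : ∀ z ∈ U, ¬ ∀ᶠ w in 𝓝 z, f w = f z := by
    intro z hz h
    have h1 : ∀ᶠ w in 𝓝[≠] z, f w = f z ∧ w ∈ U :=
      (h.and (hU.mem_nhds hz)).filter_mono nhdsWithin_le_nhds
    obtain ⟨w, ⟨hw1, hw2⟩, hw3⟩ := (h1.and self_mem_nhdsWithin).exists
    exact hw3 (hi hw2 hz hw1)
  have hop : ∀ z ∈ U, 𝓝 (f z) ≤ map f (𝓝 z) := fun z hz =>
    ((han z hz).eventually_constant_or_nhds_le_map_nhds).resolve_left (hnc z hz)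
  set g := Function.invFunOn f U with hg
  have hgl : ∀ z ∈ U, g (f z) = z := fun z hz => hi.leftInvOn_invFunOn hz
  have hopen : IsOpen (f '' U) := by
    rw [isOpen_iff_mem_nhds]
    rintro _ ⟨z, hz, rfl⟩
    exact hop z hz (image_mem_map (hU.mem_nhds hz))
  have hgc : ∀ z ∈ U, Tendsto g (𝓝 (f z)) (𝓝 z) := by
    intro z hz
    refine (tendsto_map' ?_ : Tendsto g (map f (𝓝 z)) (𝓝 z)).mono_left (hop z hz)
    refine tendsto_id.congr' ?_
    filter_upwards [hU.mem_nhds hz] with w hw using (hgl w hw).symm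
  refine ⟨hopen, g, hgl, ?_⟩
  have hd1 : ∀ z ∈ U, deriv f z ≠ 0 → DifferentiableAt ℂ g (f z) := by
    intro z hz hne
    have h1 : HasDerivAt f (deriv f z) (g (f z)) := by
      rw [hgl z hz]; exact (hf.differentiableAt (hU.mem_nhds hz)).hasDerivAt
    have h2 : ContinuousAt g (f z) := by
      rw [ContinuousAt, hgl z hz]; exact hgc z hz
    refine (HasDerivAt.of_local_left_inverse h2 h1 hne ?_).differentiableAt
    filter_upwards [hopen.mem_nhds (mem_image_of_mem f hz)]
    rintro _ ⟨w, hw, rfl⟩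
    rw [hgl w hw]
  rintro _ ⟨z, hz, rfl⟩
  apply DifferentiableAt.differentiableWithinAt
  by_cases hne : deriv f z ≠ 0
  · exact hd1 z hz hne
  have hdan : AnalyticAt ℂ (deriv f) z := (han z hz).deriv
  have hiso : ∀ᶠ w in 𝓝[≠] z, deriv f w ≠ 0 := by
    rcases hdan.eventually_eq_zero_or_eventually_ne_zero with h | h
    · exfalso
      apply hnc z hz
      obtain ⟨r, hr, hb⟩ := Metric.eventually_nhds_iff_ball.1 (h.and (hU.mem_nhds hz))
      have : ∀ w ∈ ball z r, f w = f z := by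
        intro w hw
        refine (convex_ball z r).is_const_of_fderivWithin_eq_zero (𝕜 := ℂ) (f := f) ?_ ?_ hw
          (mem_ball_self hr)
        · exact fun x hx => (hf.differentiableAt (hU.mem_nhds (hb x hx).2)).differentiableWithinAt
        · intro x hx
          rw [fderivWithin_of_isOpen isOpen_ball hx]
          ext
          simp [(hb x hx).1]
      exact Metric.eventually_nhds_iff_ball.2 ⟨r, hr, this⟩
    · exact h
  have hpunct : ∀ᶠ y in 𝓝[≠] (f z), DifferentiableAt ℂ g y := by
    have h1 : ∀ᶠ w in 𝓝 z, w ≠ z → deriv f w ≠ 0 := by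
      simpa [eventually_nhdsWithin_iff] using hiso
    have h2 : ∀ᶠ y in 𝓝 (f z), (g y ≠ z → deriv f (g y) ≠ 0) ∧ y ∈ f '' U :=
      ((hgc z hz).eventually h1).and (hopen.mem_nhds (mem_image_of_mem f hz))
    rw [eventually_nhdsWithin_iff]
    filter_upwards [h2]
    rintro _ ⟨h3, w, hw, rfl⟩ hyz
    rw [hgl w hw] at h3
    exact hd1 w hw (h3 fun h => hyz (by simp [h]))
  obtain ⟨s, hs, hsd⟩ : ∃ s ∈ 𝓝 (f z), ∀ y ∈ s \ {f z}, DifferentiableAt ℂ g y := by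
    rw [eventually_nhdsWithin_iff] at hpunct
    exact ⟨_, hpunct, fun y hy => hy.1 hy.2⟩
  have := (Complex.differentiableOn_compl_singleton_and_continuousAt_iff (f := g) hs).1
    ⟨fun y hy => (hsd y hy).differentiableWithinAt, by
      rw [ContinuousAt, hgl z hz]; exact hgc z hz⟩
  exact this.differentiableAt hs

/-- Holomorphic square root on the disk. -/
theorem holo_sqrt {P : ℂ → ℂ} (hP : DifferentiableOn ℂ P (ball 0 1))
    (h0 : ∀ z ∈ ball (0:ℂ) 1, P z ≠ 0) (h1 : P 0 = 1) :
    ∃ S : ℂ → ℂ, DifferentiableOn ℂ S (ball 0 1) ∧ (∀ z ∈ ball (0:ℂ) 1, S z ^ 2 = P z) ∧ S 0 = 1 := by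
  have hd : DifferentiableOn ℂ (fun z => deriv P z / P z) (ball 0 1) :=
    ((hP.deriv isOpen_ball).div hP h0)
  obtain ⟨E, hE0, hE⟩ := (hd.isExactOn_ball).with_val_at 0 0
  have hmem : (0:ℂ) ∈ ball (0:ℂ) 1 := by simp
  have hEd : DifferentiableOn ℂ E (ball 0 1) := fun z hz =>
    (hE z hz).differentiableAt.differentiableWithinAt
  have key : ∀ z ∈ ball (0:ℂ) 1, P z * Complex.exp (-E z) = 1 := by
    intro z hz
    have h2 : ∀ x ∈ ball (0:ℂ) 1, HasDerivAt (fun z => P z * Complex.exp (-E z)) 0 x := by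
      intro x hx
      have hp := (hP.differentiableAt (isOpen_ball.mem_nhds hx)).hasDerivAt
      have := hp.mul ((hE x hx).neg.cexp)
      have hne := h0 x hx
      exact this.congr_deriv (by field_simp; ring)
    have := (convex_ball (0:ℂ) 1).is_const_of_fderivWithin_eq_zero (𝕜 := ℂ)
      (f := fun z => P z * Complex.exp (-E z))
      (fun x hx => (h2 x hx).differentiableAt.differentiableWithinAt)
      (fun x hx => by
        rw [fderivWithin_of_isOpen isOpen_ball hx]
        ext; simp [(h2 x hx).deriv]) hz hmem
    simpa [h1, hE0] using this
  refine ⟨fun z => Complex.exp (E z / 2), ?_, ?_, by simp [hE0]⟩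
  · exact (hEd.div_const 2).cexp
  · intro z hz
    rw [← Complex.exp_nat_mul]
    have := key z hz
    rw [Complex.exp_neg] at this
    field_simp [Complex.exp_ne_zero] at this
    push_cast
    rw [mul_div_cancel₀ _ (by norm_num)]
    exact this.symm


/-- Normalised univalent functions on the disk, covering the unit disk. -/
def GoodMap (ψ : ℂ → ℂ) : Prop :=
  DifferentiableOn ℂ ψ (ball 0 1) ∧ InjOn ψ (ball 0 1) ∧ ψ 0 = 0 ∧
  (∃ c : ℝ, 0 < c ∧ deriv ψ 0 = (c : ℂ)) ∧ ball (0:ℂ) 1 ⊆ ψ '' ball 0 1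

theorem zero_mem_disk : (0:ℂ) ∈ ball (0:ℂ) 1 := by simp

theorem goodMap_T {ψ : ℂ → ℂ} (h : GoodMap ψ) {a : ℂ} (ha : a ∉ ψ '' ball 0 1) :
    ∃ T : ℂ → ℂ, DifferentiableOn ℂ T (ball 0 1) ∧ T 0 = 1 / 2 ∧
      ∀ z ∈ ball (0:ℂ) 1, T z ≠ 0 ∧ ‖T z‖ ≤ 3 * ‖a‖ ∧ ψ z = a * (1 - ((T z)⁻¹ - 1) ^ 2) := by
  obtain ⟨hd, hi, h0, -, hc⟩ := h
  have ha1 : 1 ≤ ‖a‖ := by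
    by_contra hlt
    exact ha (hc (by simpa using hlt))
  have hane : a ≠ 0 := by rintro rfl; simp at ha1; linarith
  obtain ⟨S, hSd, hS2, hS0⟩ := holo_sqrt (P := fun z => 1 - ψ z / a)
    ((differentiableOn_const _).sub (hd.div_const a))
    (fun z hz he => ha ⟨z, hz, by
      have : ψ z / a = 1 := (sub_eq_zero.1 he).symm
      field_simp at this; exact this⟩) (by simp [h0])
  obtain ⟨hop, g, hgl, hgd⟩ := inv_holo isOpen_ball hd hi
  set ρ : ℝ := 1 / (3 * ‖a‖) with hρ
  have hρ0 : 0 < ρ := by positivity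
  have hρ1 : ρ ≤ 1 / 3 := by
    rw [hρ]; apply one_div_le_one_div_of_le <;> linarith
  have hmaps : ∀ s ∈ ball (1:ℂ) ρ, a * (1 - s ^ 2) ∈ ball (0:ℂ) 1 := by
    intro s hs
    rw [mem_ball, dist_eq_norm] at hs
    have e : a * (1 - s ^ 2) = -(a * ((s - 1) * (2 + (s - 1)))) := by ring
    rw [mem_ball_zero_iff, e, norm_neg, norm_mul, norm_mul]
    have h2 : ‖(2:ℂ) + (s - 1)‖ ≤ 2 + ρ := by
      refine (norm_add_le _ _).trans ?_
      simp; linarith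
    have h3 : ‖a‖ * ρ = 1 / 3 := by rw [hρ]; field_simp
    calc ‖a‖ * (‖s - 1‖ * ‖(2:ℂ) + (s - 1)‖) ≤ ‖a‖ * (ρ * (2 + ρ)) := by gcongr
      _ = (‖a‖ * ρ) * (2 + ρ) := by ring
      _ < 1 := by rw [h3]; linarith
  have hball : ∀ s ∈ ball (1:ℂ) ρ, s ≠ 0 := by
    rintro s hs rfl
    simp [mem_ball, dist_eq_norm] at hs
    linarith
  have hSne : ∀ z ∈ ball (0:ℂ) 1, S z ≠ 0 := by
    intro z hz h
    have := hS2 z hz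
    rw [h] at this
    apply ha
    refine ⟨z, hz, ?_⟩
    have : ψ z / a = 1 := by
      have h' : (1:ℂ) - ψ z / a = 0 := by rw [← this]; ring
      exact (sub_eq_zero.1 h').symm
    field_simp at this; exact this
  have hgm : ∀ w ∈ ψ '' ball 0 1, g w ∈ ball (0:ℂ) 1 ∧ ψ (g w) = w := by
    rintro _ ⟨z, hz, rfl⟩
    rw [hgl z hz]; exact ⟨hz, rfl⟩
  have hG : ∀ s ∈ ball (1:ℂ) ρ, S (g (a * (1 - s ^ 2))) = s := by
    intro s hs
    refine (convex_ball (1:ℂ) ρ).isPreconnected.eq_of_sq_eq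
      (f := fun s => S (g (a * (1 - s ^ 2)))) (g := fun s => s) ?_ continuousOn_id ?_
      (fun hx => hball _ hx) (y := 1) (mem_ball_self hρ0) ?_ hs
    · refine hSd.continuousOn.comp (hgd.continuousOn.comp (by fun_prop) ?_) ?_
      · exact fun s hs => hc (hmaps s hs)
      · exact fun s hs => (hgm _ (hc (hmaps s hs))).1
    · intro s hs
      have h1 := hgm _ (hc (hmaps s hs))
      have h2 := hS2 _ h1.1
      simp only [Pi.pow_apply]
      rw [h2, h1.2]
      field_simp
      ring
    · have := hgl 0 zero_mem_disk
      rw [h0] at this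
      simp [this, hS0]
  have hS1 : ∀ z ∈ ball (0:ℂ) 1, ρ ≤ ‖1 + S z‖ := by
    intro z hz
    by_contra hlt
    push Not at hlt
    have hs : -S z ∈ ball (1:ℂ) ρ := by
      rw [mem_ball, dist_eq_norm, ← norm_neg]
      have e : -(-S z - 1) = 1 + S z := by ring
      rw [e]; exact hlt
    have h1 := hG _ hs
    have h2 : a * (1 - (-S z) ^ 2) = ψ z := by
      rw [neg_sq, hS2 z hz]; field_simp; ring
    rw [h2, hgl z hz] at h1
    exact hSne z hz (by
      have : (2:ℂ) * S z = 0 := by linear_combination h1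
      simpa using this)
  have hne1 : ∀ z ∈ ball (0:ℂ) 1, 1 + S z ≠ 0 := by
    intro z hz h
    have := hS1 z hz
    rw [h, norm_zero] at this
    linarith
  refine ⟨fun z => (1 + S z)⁻¹, ((differentiableOn_const _).add hSd).inv hne1, by
    simp [hS0]; norm_num, ?_⟩
  intro z hz
  refine ⟨inv_ne_zero (hne1 z hz), ?_, ?_⟩
  · rw [norm_inv]
    have := hS1 z hz
    have h3 : 3 * ‖a‖ = ρ⁻¹ := by rw [hρ]; field_simp
    rw [h3]
    exact inv_anti₀ hρ0 this
  · simp only [inv_inv]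
    have := hS2 z hz
    have e : (1:ℂ) - (1 + S z - 1) ^ 2 = ψ z / a := by
      have : S z ^ 2 = 1 - ψ z / a := this
      linear_combination -this
    rw [e]; field_simp

/-- Montel along an ultrafilter. -/
theorem montel_ultra {ι : Type*} (𝒰 : Ultrafilter ι) (ψ : ι → ℂ → ℂ)
    (hd : ∀ᶠ t in 𝒰, DifferentiableOn ℂ (ψ t) (ball 0 1))
    (hb : ∀ r < (1:ℝ), ∃ B : ℝ, ∀ᶠ t in 𝒰, ∀ z ∈ closedBall (0:ℂ) r, ‖ψ t z‖ ≤ B) :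
    ∃ F : ℂ → ℂ, TendstoLocallyUniformlyOn ψ F 𝒰 (ball 0 1) ∧ DifferentiableOn ℂ F (ball 0 1) := by
  have hpt : ∀ z ∈ ball (0:ℂ) 1, ∃ w, Tendsto (fun t => ψ t z) 𝒰 (𝓝 w) := by
    intro z hz
    obtain ⟨B, hB⟩ := hb ‖z‖ (by simpa using hz)
    have hc := (isCompact_closedBall (0:ℂ) B).ultrafilter_le_nhds (𝒰.map (fun t => ψ t z)) (by
      rw [le_principal_iff]
      show ∀ᶠ t in 𝒰, ψ t z ∈ closedBall (0:ℂ) B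
      filter_upwards [hB] with t ht
      simpa using ht z (by simp))
    obtain ⟨w, -, hw⟩ := hc
    exact ⟨w, hw⟩
  choose! F hF using hpt
  have hloc : TendstoLocallyUniformlyOn ψ F 𝒰 (ball 0 1) := by
    rw [Metric.tendstoLocallyUniformlyOn_iff]
    intro ε hε z hz
    have hz1 : ‖z‖ < 1 := by simpa using hz
    set R := (1 - ‖z‖) / 2 with hR
    have hR0 : 0 < R := by rw [hR]; linarith
    obtain ⟨B, hB⟩ := hb (‖z‖ + R) (by rw [hR]; linarith)
    have hsub : ball z R ⊆ closedBall (0:ℂ) (‖z‖ + R) := by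
      intro w hw
      rw [mem_ball, dist_eq_norm] at hw
      rw [mem_closedBall_zero_iff]
      calc ‖w‖ = ‖z + (w - z)‖ := by ring_nf
        _ ≤ ‖z‖ + ‖w - z‖ := norm_add_le _ _
        _ ≤ _ := by linarith
    have hsub1 : ball z R ⊆ ball (0:ℂ) 1 := by
      intro w hw
      have := hsub hw
      rw [mem_closedBall_zero_iff] at this
      rw [mem_ball_zero_iff]; rw [hR] at this; linarith
    set M := (2 * |B| + 1) / R with hM
    have hM0 : 0 < M := by positivity
    have hlip : ∀ᶠ t in 𝒰, ∀ w ∈ ball z R, dist (ψ t w) (ψ t z) ≤ M * dist w z := by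
      filter_upwards [hd, hB] with t htd htB w hw
      refine Complex.dist_le_div_mul_dist_of_mapsTo_ball (htd.mono hsub1) ?_ hw
      intro x hx
      have h1 := htB x (hsub hx)
      have h2 := htB z (hsub (mem_ball_self hR0))
      rw [mem_closedBall, dist_eq_norm]
      refine (norm_sub_le _ _).trans ?_
      have := le_abs_self B
      linarith
    have hFlip : ∀ w ∈ ball z R, dist (F w) (F z) ≤ M * dist w z := by
      intro w hw
      refine le_of_tendsto ((hF w (hsub1 hw)).dist (hF z hz)) ?_
      filter_upwards [hlip] with t ht using ht w hw
    refine ⟨ball z (min R (ε / (4 * M))), mem_nhdsWithin_of_mem_nhds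
      (ball_mem_nhds _ (by positivity)), ?_⟩
    filter_upwards [hlip, Metric.tendsto_nhds.1 (hF z hz) (ε / 4) (by positivity)] with t ht1 ht2 w hw
    have hw1 : w ∈ ball z R := ball_subset_ball (min_le_left _ _) hw
    have hw2 : M * dist w z ≤ ε / 4 := by
      have : dist w z < ε / (4 * M) := lt_of_lt_of_le hw (min_le_right _ _)
      rw [lt_div_iff₀ (by positivity)] at this
      linarith
    have h1 := ht1 w hw1
    have h2 := hFlip w hw1
    calc dist (F w) (ψ t w) ≤ dist (F w) (F z) + dist (F z) (ψ t z) + dist (ψ t z) (ψ t w) :=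
          dist_triangle4 _ _ _ _
      _ < ε := by
          have h3 := dist_comm (F z) (ψ t z)
          have h4 := dist_comm (ψ t z) (ψ t w)
          linarith
  refine ⟨F, hloc, hloc.differentiableOn hd isOpen_ball⟩

/-- Hurwitz. -/
theorem hurwitz_ultra {ι : Type*} {l : Filter ι} [l.NeBot] {ψ : ι → ℂ → ℂ} {F : ℂ → ℂ}
    (hd : ∀ᶠ t in l, DifferentiableOn ℂ (ψ t) (ball 0 1))
    (hl : TendstoLocallyUniformlyOn ψ F l (ball 0 1))
    (hne : ∀ᶠ t in l, ∀ z ∈ ball (0:ℂ) 1, ψ t z ≠ 0)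
    {z₀ : ℂ} (hz₀ : z₀ ∈ ball (0:ℂ) 1) (h0 : F z₀ = 0) : ∀ z ∈ ball (0:ℂ) 1, F z = 0 := by
  have hFd : DifferentiableOn ℂ F (ball 0 1) := hl.differentiableOn hd isOpen_ball
  have han := hFd.analyticOnNhd isOpen_ball
  rcases (han z₀ hz₀).eventually_eq_zero_or_eventually_ne_zero with h | h
  · exact han.eqOn_zero_of_preconnected_of_eventuallyEq_zero (convex_ball _ _).isPreconnected hz₀ h
  exfalso
  rw [eventually_nhdsWithin_iff] at h
  obtain ⟨r, hr, hb⟩ := Metric.eventually_nhds_iff_ball.1 (h.and (isOpen_ball.mem_nhds hz₀))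
  set s := r / 2
  have hs : 0 < s := by positivity
  have hcb : closedBall z₀ s ⊆ ball z₀ r := closedBall_subset_ball (by simp only [s]; linarith)
  have hsub : closedBall z₀ s ⊆ ball (0:ℂ) 1 := fun x hx => (hb x (hcb hx)).2
  have hsn : (sphere z₀ s).Nonempty := (NormedSpace.sphere_nonempty).2 hs.le
  obtain ⟨x, hx, hmin⟩ := (isCompact_sphere z₀ s).exists_isMinOn hsn
    (hFd.continuousOn.mono (sphere_subset_closedBall.trans hsub)).norm
  have hm : 0 < ‖F x‖ := norm_pos_iff.2 ((hb x (hcb (sphere_subset_closedBall hx))).1 (by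
    rintro rfl; simp at hx; linarith))
  have hu := (tendstoLocallyUniformlyOn_iff_forall_isCompact isOpen_ball).1 hl _ hsub
    (isCompact_closedBall z₀ s)
  rw [Metric.tendstoUniformlyOn_iff] at hu
  obtain ⟨t, htd, htne, htu⟩ := (hd.and (hne.and (hu (‖F x‖ / 2) (by positivity)))).exists
  have hz : ‖ψ t z₀‖ < ‖F x‖ / 2 := by
    have := htu z₀ (mem_closedBall_self hs.le)
    rwa [h0, dist_zero_left] at this
  have hbd : ∀ y ∈ frontier (ball z₀ s), ‖(ψ t y)⁻¹‖ ≤ (‖F x‖ / 2)⁻¹ := by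
    intro y hy
    rw [frontier_ball _ hs.ne'] at hy
    have h1 := htu y (sphere_subset_closedBall hy)
    rw [dist_eq_norm] at h1
    have h2 : ‖F x‖ ≤ ‖F y‖ := hmin hy
    rw [norm_inv]
    apply inv_anti₀ (by positivity)
    have := norm_sub_norm_le (F y) (ψ t y)
    linarith
  have hdc : DiffContOnCl ℂ (fun y => (ψ t y)⁻¹) (ball z₀ s) := by
    apply DifferentiableOn.diffContOnCl
    rw [closure_ball _ hs.ne']
    exact (htd.mono hsub).inv fun y hy => htne y (hsub hy)
  have := Complex.norm_le_of_forall_mem_frontier_norm_le isBounded_ball hdc hbd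
    (subset_closure (mem_ball_self hs))
  rw [norm_inv] at this
  have h3 : ‖F x‖ / 2 ≤ ‖ψ t z₀‖ :=
    (inv_le_inv₀ (norm_pos_iff.2 (htne z₀ hz₀)) (by positivity)).1 this
  linarith


theorem goodMap_compare {ψ ψ0 : ℂ → ℂ} (h : GoodMap ψ) (hd : DifferentiableOn ℂ ψ0 (ball 0 1))
    (h0 : ψ0 0 = 0) {r : ℝ} (hr : 0 < r) (hr1 : r ≤ 1)
    (hsub : ψ0 '' ball 0 r ⊆ ψ '' ball 0 1) :
    ∃ k : ℂ → ℂ, DifferentiableOn ℂ k (ball 0 r) ∧ k 0 = 0 ∧ MapsTo k (ball 0 r) (ball 0 1) ∧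
      (∀ x ∈ ball (0:ℂ) r, ψ (k x) = ψ0 x ∧ ‖k x‖ ≤ ‖x‖ / r) ∧
      deriv ψ0 0 = deriv ψ 0 * deriv k 0 ∧ ‖deriv k 0‖ ≤ 1 / r := by
  obtain ⟨hψd, hi, hz, -, -⟩ := h
  obtain ⟨hO, g, hg, hgd⟩ := inv_holo isOpen_ball hψd hi
  have hmem : (0:ℂ) ∈ ball (0:ℂ) r := by simpa using hr
  have hkd : DifferentiableOn ℂ (fun x => g (ψ0 x)) (ball 0 r) :=
    hgd.comp (hd.mono (ball_subset_ball hr1)) (fun x hx => hsub ⟨x, hx, rfl⟩)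
  have hk0 : g (ψ0 0) = 0 := by
    rw [h0]; have := hg 0 zero_mem_disk; rwa [hz] at this
  have hkey : ∀ x ∈ ball (0:ℂ) r, g (ψ0 x) ∈ ball (0:ℂ) 1 ∧ ψ (g (ψ0 x)) = ψ0 x := by
    intro x hx
    obtain ⟨z, hz1, hz2⟩ := hsub ⟨x, hx, rfl⟩
    rw [← hz2, hg z hz1]; exact ⟨hz1, rfl⟩
  have hmaps : MapsTo (fun x => g (ψ0 x)) (ball 0 r) (closedBall ((fun x => g (ψ0 x)) 0) 1) := by
    intro x hx
    simp only [hk0]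
    exact ball_subset_closedBall (hkey x hx).1
  refine ⟨fun x => g (ψ0 x), hkd, hk0, fun x hx => (hkey x hx).1, fun x hx => ⟨(hkey x hx).2, ?_⟩, ?_,
    Complex.norm_deriv_le_div_of_mapsTo_ball hkd hmaps hr⟩
  · have := Complex.dist_le_div_mul_dist_of_mapsTo_ball hkd hmaps hx
    simp only [hk0, dist_zero_right] at this
    calc _ ≤ _ := this
      _ = _ := by ring
  · have h1 : ψ0 =ᶠ[𝓝 0] fun x => ψ (g (ψ0 x)) := by
      filter_upwards [isOpen_ball.mem_nhds hmem] with x hx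
      exact (hkey x hx).2.symm
    rw [h1.deriv_eq]
    have h2 : HasDerivAt (fun x => g (ψ0 x)) (deriv (fun x => g (ψ0 x)) 0) 0 :=
      (hkd.differentiableAt (isOpen_ball.mem_nhds hmem)).hasDerivAt
    have h3 : HasDerivAt ψ (deriv ψ 0) ((fun x => g (ψ0 x)) 0) := by
      simp only [hk0]
      exact (hψd.differentiableAt (isOpen_ball.mem_nhds zero_mem_disk)).hasDerivAt
    exact (h3.comp 0 h2).deriv

theorem kernel_ultra {ι : Type*} (𝒰 : Ultrafilter ι) (ψ : ι → ℂ → ℂ) (ψ0 : ℂ → ℂ)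
    (hg : ∀ᶠ t in 𝒰, GoodMap (ψ t)) (hg0 : GoodMap ψ0)
    (a : ι → ℂ) (A : ℝ) (ha : ∀ᶠ t in 𝒰, a t ∉ ψ t '' ball 0 1 ∧ ‖a t‖ ≤ A)
    (hii : ∀ r < (1:ℝ), ∀ᶠ t in 𝒰, ψ0 '' closedBall 0 r ⊆ ψ t '' ball 0 1)
    (W0 : Set ℂ) (hW0 : IsOpen W0) (hdisj : Disjoint (ψ0 '' ball 0 1) W0)
    (hiii : ∀ v, v ∉ ψ0 '' ball 0 1 → v ∉ W0 →
      ∃ w : ι → ℂ, Tendsto w 𝒰 (𝓝 v) ∧ ∀ᶠ t in 𝒰, w t ∉ ψ t '' ball 0 1) :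
    TendstoLocallyUniformlyOn ψ ψ0 𝒰 (ball 0 1) := by
  have hψd : ∀ᶠ t in 𝒰, DifferentiableOn ℂ (ψ t) (ball 0 1) := hg.mono fun t h => h.1
  have hT : ∀ t, ∃ T : ℂ → ℂ, GoodMap (ψ t) → a t ∉ ψ t '' ball 0 1 →
      DifferentiableOn ℂ T (ball 0 1) ∧ T 0 = 1 / 2 ∧
      ∀ z ∈ ball (0:ℂ) 1, T z ≠ 0 ∧ ‖T z‖ ≤ 3 * ‖a t‖ ∧
        ψ t z = a t * (1 - ((T z)⁻¹ - 1) ^ 2) := by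
    intro t
    by_cases h1 : GoodMap (ψ t) ∧ a t ∉ ψ t '' ball 0 1
    · obtain ⟨T, hT⟩ := goodMap_T h1.1 h1.2
      exact ⟨T, fun _ _ => hT⟩
    · exact ⟨fun _ => 0, fun h2 h3 => absurd ⟨h2, h3⟩ h1⟩
  choose T hT using hT
  have hTd : ∀ᶠ t in 𝒰, DifferentiableOn ℂ (T t) (ball 0 1) := by
    filter_upwards [hg, ha] with t h1 h2
    exact (hT t h1 h2.1).1
  obtain ⟨T0, hT0, hT0d⟩ := montel_ultra 𝒰 T hTd (by
    intro r hr
    refine ⟨3 * A, ?_⟩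
    filter_upwards [hg, ha] with t h1 h2 z hz
    have := ((hT t h1 h2.1).2.2 z (closedBall_subset_ball hr hz)).2.1
    linarith [h2.2])
  have hT00 : T0 0 = 1 / 2 := by
    refine tendsto_nhds_unique (hT0.tendsto_at zero_mem_disk) ?_
    refine tendsto_const_nhds.congr' ?_
    filter_upwards [hg, ha] with t h1 h2
    exact (hT t h1 h2.1).2.1.symm
  have hT0ne : ∀ z ∈ ball (0:ℂ) 1, T0 z ≠ 0 := by
    intro z hz h
    have := hurwitz_ultra hTd hT0 (by
      filter_upwards [hg, ha] with t h1 h2 z hz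
      exact ((hT t h1 h2.1).2.2 z hz).1) hz h 0 zero_mem_disk
    rw [hT00] at this; norm_num at this
  obtain ⟨F, hF, hFd⟩ := montel_ultra 𝒰 ψ hψd (by
    intro r hr
    rcases lt_or_ge r 0 with hr0 | hr0
    · exact ⟨0, Eventually.of_forall fun t z hz => by
        rw [closedBall_eq_empty.2 hr0] at hz; exact absurd hz (by simp)⟩
    have hsub : closedBall (0:ℂ) r ⊆ ball 0 1 := closedBall_subset_ball hr
    obtain ⟨z1, hz1, hmin⟩ := (isCompact_closedBall (0:ℂ) r).exists_isMinOn ⟨0, by simpa using hr0⟩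
      ((hT0d.continuousOn.mono hsub).norm)
    have hm : 0 < ‖T0 z1‖ := norm_pos_iff.2 (hT0ne z1 (hsub hz1))
    set m := ‖T0 z1‖ with hmdef
    have hu := (tendstoLocallyUniformlyOn_iff_forall_isCompact isOpen_ball).1 hT0 _ hsub
      (isCompact_closedBall (0:ℂ) r)
    have hu2 := Metric.tendstoUniformlyOn_iff.1 hu (m / 2) (by positivity)
    refine ⟨A * (1 + ((m / 2)⁻¹ + 1) ^ 2), ?_⟩
    filter_upwards [hg, ha, hu2] with t h1 h2 h3 z hz
    obtain ⟨-, -, h4⟩ := (hT t h1 h2.1).2.2 z (hsub hz)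
    have h5 : m / 2 ≤ ‖T t z‖ := by
      have e1 := h3 z hz
      have e2 : m ≤ ‖T0 z‖ := hmin hz
      rw [dist_eq_norm] at e1
      have e3 := norm_sub_norm_le (T0 z) (T t z)
      linarith
    have h6 : ‖(T t z)⁻¹‖ ≤ (m / 2)⁻¹ := by
      rw [norm_inv]; exact inv_anti₀ (by positivity) h5
    rw [h4, norm_mul]
    refine mul_le_mul h2.2 ?_ (norm_nonneg _) ((norm_nonneg _).trans h2.2)
    calc _ ≤ ‖(1:ℂ)‖ + ‖((T t z)⁻¹ - 1) ^ 2‖ := norm_sub_le _ _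
      _ ≤ _ := by
        rw [norm_one, norm_pow]
        have : ‖(T t z)⁻¹ - 1‖ ≤ (m / 2)⁻¹ + 1 := (norm_sub_le _ _).trans (by rw [norm_one]; linarith)
        gcongr)
  have hF0 : F 0 = 0 := by
    refine tendsto_nhds_unique (hF.tendsto_at zero_mem_disk) ?_
    refine tendsto_const_nhds.congr' ?_
    filter_upwards [hg] with t h1
    exact h1.2.2.1.symm
  have hder : Tendsto (fun t => deriv (ψ t) 0) 𝒰 (𝓝 (deriv F 0)) :=
    (hF.deriv hψd isOpen_ball).tendsto_at zero_mem_disk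
  obtain ⟨c0, hc0, hc0e⟩ := hg0.2.2.2.1
  have hlow : ∀ r : ℝ, 0 < r → r < 1 → r * c0 ≤ ‖deriv F 0‖ := by
    intro r hr hr1
    refine ge_of_tendsto hder.norm ?_
    filter_upwards [hg, hii r hr1] with t h1 h2
    obtain ⟨k, -, -, -, -, h3, h4⟩ := goodMap_compare h1 hg0.1 hg0.2.2.1 hr hr1.le
      ((image_mono ball_subset_closedBall).trans h2)
    have h5 : c0 = ‖deriv (ψ t) 0‖ * ‖deriv k 0‖ := by
      rw [← norm_mul, ← h3, hc0e]; simp [abs_of_pos hc0]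
    have h6 : c0 ≤ ‖deriv (ψ t) 0‖ * (1 / r) := by
      rw [h5]; gcongr
    have h7 : r * (‖deriv (ψ t) 0‖ * (1 / r)) = ‖deriv (ψ t) 0‖ := by field_simp
    calc r * c0 ≤ _ := mul_le_mul_of_nonneg_left h6 hr.le
      _ = _ := h7
  have hlow1 : c0 ≤ ‖deriv F 0‖ := by
    have h1 : Tendsto (fun r : ℝ => r * c0) (𝓝[<] 1) (𝓝 (1 * c0)) :=
      (tendsto_id.mono_left nhdsWithin_le_nhds).mul_const _
    rw [one_mul] at h1
    refine le_of_tendsto h1 ?_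
    filter_upwards [Ioo_mem_nhdsLT (show (0:ℝ) < 1 by norm_num)] with r hr
    exact hlow r hr.1 hr.2
  have hnc : ∀ v : ℂ, ¬ (∀ z ∈ ball (0:ℂ) 1, F z = v) := by
    intro v hv
    have : deriv F 0 = 0 := by
      have e : F =ᶠ[𝓝 0] fun _ => v := by
        filter_upwards [isOpen_ball.mem_nhds zero_mem_disk] with z hz using hv z hz
      rw [e.deriv_eq]; simp
    rw [this, norm_zero] at hlow1; linarith
  have hsub : F '' ball 0 1 ⊆ ψ0 '' ball 0 1 ∪ W0 := by
    rintro v ⟨z, hz, rfl⟩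
    by_contra hcon
    rw [mem_union, not_or] at hcon
    obtain ⟨w, hw, hw2⟩ := hiii _ hcon.1 hcon.2
    refine hnc (F z) ?_
    have hl : TendstoLocallyUniformlyOn (fun t x => ψ t x - w t) (fun x => F x - F z) 𝒰 (ball 0 1) := by
      have := hF.sub (show TendstoLocallyUniformlyOn (fun t (_:ℂ) => w t) (fun _ => F z) 𝒰 (ball 0 1) from
        ((Metric.tendstoUniformlyOn_iff.2 fun ε hε => by
          filter_upwards [(Metric.tendsto_nhds.1 hw) ε hε] with t ht x _
          rw [dist_comm]; exact ht).tendstoLocallyUniformlyOn))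
      exact this
    have := hurwitz_ultra (hψd.mono fun t h => h.sub (differentiableOn_const _)) hl (by
      filter_upwards [hw2] with t ht x hx he
      exact ht ⟨x, hx, sub_eq_zero.1 he⟩) hz (sub_self _)
    intro x hx
    exact sub_eq_zero.1 (this x hx)
  obtain ⟨hO, -⟩ := inv_holo isOpen_ball hg0.1 hg0.2.1
  have hsub2 : F '' ball 0 1 ⊆ ψ0 '' ball 0 1 := by
    refine IsPreconnected.subset_left_of_subset_union hO hW0 hdisj hsub ?_
      ((convex_ball (0:ℂ) 1).isPreconnected.image _ hFd.continuousOn)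
    exact ⟨0, ⟨0, zero_mem_disk, hF0⟩, ⟨0, zero_mem_disk, hg0.2.2.1⟩⟩
  obtain ⟨k, hkd, hk0, hkm, hk1, hk2, hk3⟩ := goodMap_compare hg0 hFd hF0 one_pos le_rfl hsub2
  have hn : ‖deriv k 0‖ = 1 := by
    refine le_antisymm (by simpa using hk3) ?_
    rw [hk2, hc0e, norm_mul, Complex.norm_real, Real.norm_of_nonneg hc0.le] at hlow1
    by_contra hlt
    push Not at hlt
    nlinarith
  have hre : ∃ d : ℝ, 0 ≤ d ∧ deriv F 0 = (d : ℂ) := by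
    have h1 : Tendsto (fun t => (deriv (ψ t) 0).im) 𝒰 (𝓝 (deriv F 0).im) :=
      (Complex.continuous_im.tendsto _).comp hder
    have h2 : Tendsto (fun t => (deriv (ψ t) 0).re) 𝒰 (𝓝 (deriv F 0).re) :=
      (Complex.continuous_re.tendsto _).comp hder
    refine ⟨(deriv F 0).re, ge_of_tendsto h2 ?_, ?_⟩
    · filter_upwards [hg] with t h
      obtain ⟨c, hc, hce⟩ := h.2.2.2.1
      rw [hce]; simpa using hc.le
    · have h3 : (deriv F 0).im = 0 := by
        refine tendsto_nhds_unique h1 (tendsto_const_nhds.congr' ?_)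
        filter_upwards [hg] with t h
        obtain ⟨c, hc, hce⟩ := h.2.2.2.1
        rw [hce]; simp
      exact Complex.ext (by simp) (by simp [h3])
  have hk1' : deriv k 0 = 1 := by
    obtain ⟨d, hd, hde⟩ := hre
    rw [hc0e, hde] at hk2
    have h1 : deriv k 0 = ((d / c0 : ℝ) : ℂ) := by
      have : (c0:ℂ) ≠ 0 := by exact_mod_cast hc0.ne'
      push_cast; field_simp; rw [hk2]; ring
    rw [h1, Complex.norm_real, Real.norm_of_nonneg (by positivity)] at hn
    rw [h1, hn]; simp
  have haff := Complex.affine_of_mapsTo_ball_of_norm_dslope_eq_div (R₂ := 1) (z₀ := 0) hkd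
    (by rw [hk0]; exact fun x hx => ball_subset_closedBall (hkm hx)) zero_mem_disk
    (by rw [dslope_same, hn]; simp)
  refine hF.congr_right ?_
  intro x hx
  have h1 := haff hx
  simp only [dslope_same, hk0, hk1', sub_zero, smul_eq_mul, mul_one, zero_add] at h1
  rw [← (hk1 x hx).1, h1]

theorem kernel_pts {ι : Type*} (𝒰 : Ultrafilter ι) (ψ : ι → ℂ → ℂ) (ψ0 : ℂ → ℂ)
    (hg : ∀ᶠ t in 𝒰, GoodMap (ψ t)) (hg0 : GoodMap ψ0)
    (hii : ∀ r < (1:ℝ), ∀ᶠ t in 𝒰, ψ0 '' closedBall 0 r ⊆ ψ t '' ball 0 1)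
    (hl : TendstoLocallyUniformlyOn ψ ψ0 𝒰 (ball 0 1))
    (z : ι → ℂ) (z0 : ℂ) (hz0 : z0 ∈ ball (0:ℂ) 1) (hz : ∀ᶠ t in 𝒰, z t ∈ ball (0:ℂ) 1)
    (hlim : Tendsto (fun t => ψ t (z t)) 𝒰 (𝓝 (ψ0 z0))) : Tendsto z 𝒰 (𝓝 z0) := by
  obtain ⟨hO, g, hgl, hgd⟩ := inv_holo isOpen_ball hg0.1 hg0.2.1
  have hV : ψ0 z0 ∈ ψ0 '' ball 0 1 := ⟨z0, hz0, rfl⟩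
  have hx : Tendsto (fun t => g (ψ t (z t))) 𝒰 (𝓝 z0) := by
    have := (hgd.continuousOn.continuousAt (hO.mem_nhds hV)).tendsto.comp hlim
    rwa [hgl z0 hz0] at this
  have hz01 : ‖z0‖ < 1 := by simpa using hz0
  obtain ⟨r1, h1, h2⟩ := exists_between hz01
  obtain ⟨r, h3, h4⟩ := exists_between h2
  have hr1 : 0 < r1 := (norm_nonneg _).trans_lt h1
  have hr : 0 < r := hr1.trans h3
  have hcb : ∀ᶠ t in 𝒰, z t ∈ closedBall (0:ℂ) (r1 / r) := by
    filter_upwards [hg, hz, hii r h4, hx.norm.eventually (gt_mem_nhds h1), hlim.eventually (hO.mem_nhds hV)]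
      with t e1 e2 e3 e4 e5
    obtain ⟨k, -, -, hkm, hk, -⟩ := goodMap_compare e1 hg0.1 hg0.2.2.1 hr h4.le
      ((image_mono ball_subset_closedBall).trans e3)
    obtain ⟨x, hx, hxe⟩ := e5
    rw [← hxe, hgl x hx] at e4
    have hxr : x ∈ ball (0:ℂ) r := by simpa using e4.trans h3
    have e6 := hk x hxr
    have e7 : k x = z t := e1.2.1 (hkm hxr) e2 (by rw [e6.1, hxe])
    rw [e7] at e6
    rw [mem_closedBall, dist_zero_right]
    exact e6.2.trans (by gcongr)
  obtain ⟨z', hz', hlim'⟩ := (isCompact_closedBall (0:ℂ) (r1 / r)).ultrafilter_le_nhds (𝒰.map z)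
    (by rw [le_principal_iff]; exact hcb)
  have hlim' : Tendsto z 𝒰 (𝓝 z') := hlim'
  have hz'1 : z' ∈ ball (0:ℂ) 1 := by
    refine closedBall_subset_ball ?_ hz'
    rw [div_lt_one hr]; exact h3
  have e1 := hl.tendsto_comp (hg0.1.continuousOn z' hz'1) hz'1
    (tendsto_nhdsWithin_iff.2 ⟨hlim', hz⟩)
  have e2 := hg0.2.1 hz'1 hz0 (tendsto_nhds_unique e1 hlim)
  rwa [e2] at hlim'


open MeasureTheory in
theorem cs_curve {E : Type*} [NormedAddCommGroup E] [NormedSpace ℝ E] [CompleteSpace E]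
    {a b : ℝ} (hab : a ≤ b) {Y Y' : ℝ → E} {u : ℝ → ℝ}
    (hY : ∀ x ∈ Icc a b, HasDerivAt Y (Y' x) x) (hY' : ContinuousOn Y' (Icc a b))
    (hu : ContinuousOn u (Icc a b)) (hle : ∀ x ∈ Icc a b, ‖Y' x‖ ≤ u x) :
    ENNReal.ofReal (‖Y b - Y a‖ ^ 2) ≤
      ENNReal.ofReal (b - a) * ∫⁻ x in Ioc a b, ENNReal.ofReal (u x ^ 2) := by
  rw [← uIcc_of_le hab] at hY hY' hu hle
  have hYi : IntervalIntegrable Y' volume a b := hY'.intervalIntegrable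
  have hui : IntervalIntegrable u volume a b := hu.intervalIntegrable
  have hui2 : IntervalIntegrable (fun x => u x ^ 2) volume a b := (hu.pow 2).intervalIntegrable
  have h1 : ∫ x in a..b, Y' x = Y b - Y a := intervalIntegral.integral_eq_sub_of_hasDerivAt hY hYi
  have h2 : ‖Y b - Y a‖ ≤ ∫ x in a..b, u x := by
    rw [← h1]
    refine intervalIntegral.norm_integral_le_of_norm_le hab ?_ hui
    refine Eventually.of_forall fun x hx => hle x ?_
    rw [uIcc_of_le hab]; exact Ioc_subset_Icc_self hx
  set I := ∫ x in a..b, u x with hI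
  set Q := ∫ x in a..b, u x ^ 2 with hQ
  have h3 : I ^ 2 ≤ (b - a) * Q := by
    have h4 : ∀ m : ℝ, 0 ≤ Q - 2 * m * I + m ^ 2 * (b - a) := by
      intro m
      have h5 : ∫ x in a..b, (u x - m) ^ 2 = Q - 2 * m * I + m ^ 2 * (b - a) := by
        have : ∀ x, (u x - m) ^ 2 = (u x ^ 2 - 2 * m * u x) + m ^ 2 := fun x => by ring
        simp_rw [this]
        rw [intervalIntegral.integral_add (hui2.sub (hui.const_mul _)) (by simp),
          intervalIntegral.integral_sub hui2 (hui.const_mul _)]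
        simp [hI, hQ]; ring
      rw [← h5]
      exact intervalIntegral.integral_nonneg hab fun x _ => sq_nonneg _
    rcases hab.eq_or_lt with h | h
    · have : I = 0 := by rw [hI, h]; simp
      rw [this, h]; simp
    · have h5 : 0 < b - a := by linarith
      have h6 := h4 (I / (b - a))
      have h7 : Q - 2 * (I / (b - a)) * I + (I / (b - a)) ^ 2 * (b - a) = Q - I ^ 2 / (b - a) := by
        field_simp; ring
      rw [h7] at h6
      have h8 : I ^ 2 / (b - a) ≤ Q := by linarith
      rw [div_le_iff₀ h5] at h8; linarith
  have h4 : ∫⁻ x in Ioc a b, ENNReal.ofReal (u x ^ 2) = ENNReal.ofReal Q := by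
    rw [hQ, intervalIntegral.integral_of_le hab]
    rw [ofReal_integral_eq_lintegral_ofReal]
    · exact (intervalIntegrable_iff_integrableOn_Ioc_of_le hab).1 hui2
    · exact Eventually.of_forall fun x => sq_nonneg _
  rw [h4, ← ENNReal.ofReal_mul (by linarith)]
  refine ENNReal.ofReal_le_ofReal (le_trans ?_ h3)
  exact pow_le_pow_left₀ (norm_nonneg _) h2 2

theorem polar_measurable {H : ℂ → ENNReal} (hH : Measurable H) :
    Measurable (fun p : ℝ × ℝ => ENNReal.ofReal p.1 * H (p.1 * Complex.exp (p.2 * Complex.I))) := by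
  have : Measurable (fun p : ℝ × ℝ => (p.1 * Complex.exp (p.2 * Complex.I) : ℂ)) :=
    Continuous.measurable (by fun_prop)
  exact (ENNReal.measurable_ofReal.comp measurable_fst).mul (hH.comp this)

open MeasureTheory in
theorem polar_lint {H : ℂ → ENNReal} :
    ∫⁻ z, H z = ∫⁻ p in (Ioi (0:ℝ)) ×ˢ (Ioo (-Real.pi) Real.pi),
      ENNReal.ofReal p.1 * H (p.1 * Complex.exp (p.2 * Complex.I)) := by
  rw [← Complex.lintegral_comp_polarCoord_symm, polarCoord_target]
  refine lintegral_congr fun p => ?_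
  rw [Complex.polarCoord_symm_apply, Complex.exp_mul_I, smul_eq_mul]
  push_cast; rfl

open MeasureTheory in
theorem polar_lint1 {H : ℂ → ENNReal} (hH : Measurable H) :
    ∫⁻ z, H z = ∫⁻ r in Ioi (0:ℝ), ∫⁻ θ in Ioo (-Real.pi) Real.pi,
      ENNReal.ofReal r * H (r * Complex.exp (θ * Complex.I)) := by
  rw [polar_lint, Measure.volume_eq_prod, ← Measure.prod_restrict,
    lintegral_prod _ (polar_measurable hH).aemeasurable]

open MeasureTheory in
theorem polar_lint2 {H : ℂ → ENNReal} (hH : Measurable H) :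
    ∫⁻ z, H z = ∫⁻ θ in Ioo (-Real.pi) Real.pi, ∫⁻ r in Ioi (0:ℝ),
      ENNReal.ofReal r * H (r * Complex.exp (θ * Complex.I)) := by
  rw [polar_lint, Measure.volume_eq_prod, ← Measure.prod_restrict,
    lintegral_prod_symm _ (polar_measurable hH).aemeasurable]

open MeasureTheory in
theorem area_holo {f : ℂ → ℂ} {S : Set ℂ} (hS : IsOpen S) (hf : DifferentiableOn ℂ f S)
    (hi : InjOn f S) (H : ℂ → ENNReal) :
    ∫⁻ z in S, ENNReal.ofReal (‖deriv f z‖ ^ 2) * H (f z) = ∫⁻ w in f '' S, H w := by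
  have h1 : ∀ z ∈ S, HasFDerivWithinAt f
      ((ContinuousLinearMap.toSpanSingleton ℂ (deriv f z)).restrictScalars ℝ) S z := by
    intro z hz
    have := (hf.differentiableAt (hS.mem_nhds hz)).hasDerivAt.hasFDerivAt
    exact (this.restrictScalars ℝ).hasFDerivWithinAt
  rw [lintegral_image_eq_lintegral_abs_det_fderiv_mul volume hS.measurableSet h1 hi]
  refine setLIntegral_congr_fun hS.measurableSet fun z _ => ?_
  congr 2
  simp [ContinuousLinearMap.det, LinearMap.det_restrictScalars, Algebra.norm_complex_apply,
    Complex.normSq_eq_norm_sq]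

open MeasureTheory in
theorem weight_int {ε : ℝ} (hε : 0 < ε) :
    ∫⁻ w in ball (0:ℂ) 2, ENNReal.ofReal (1 / (‖w‖ ^ 2 + ε ^ 2)) ≤
      ENNReal.ofReal (2 * Real.pi * (Real.log ((4 + ε ^ 2) / ε ^ 2) / 2)) := by
  have hc : Continuous fun w : ℂ => 1 / (‖w‖ ^ 2 + ε ^ 2) := by
    refine continuous_const.div (by fun_prop) fun w => ?_
    positivity
  have hm : Measurable ((ball (0:ℂ) 2).indicator fun w => ENNReal.ofReal (1 / (‖w‖ ^ 2 + ε ^ 2))) :=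
    (ENNReal.measurable_ofReal.comp hc.measurable).indicator measurableSet_ball
  rw [← lintegral_indicator measurableSet_ball, polar_lint2 hm]
  have hin : ∀ θ : ℝ, ∫⁻ r in Ioi (0:ℝ),
      ENNReal.ofReal r * (ball (0:ℂ) 2).indicator (fun w => ENNReal.ofReal (1 / (‖w‖ ^ 2 + ε ^ 2)))
        (r * Complex.exp (θ * Complex.I)) ≤ ENNReal.ofReal (Real.log ((4 + ε ^ 2) / ε ^ 2) / 2) := by
    intro θ
    have hd : ∀ r : ℝ, HasDerivAt (fun r => Real.log (r ^ 2 + ε ^ 2) / 2) (r / (r ^ 2 + ε ^ 2)) r := by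
      intro r
      have h1 : HasDerivAt (fun r : ℝ => r ^ 2 + ε ^ 2) (2 * r) r := by
        simpa using (hasDerivAt_pow 2 r).add_const (ε ^ 2)
      refine ((h1.log (by positivity)).div_const 2).congr_deriv ?_
      field_simp
    have hcont : Continuous fun r : ℝ => r / (r ^ 2 + ε ^ 2) :=
      continuous_id.div (by fun_prop) fun r => by positivity
    have e1 : ∫ r in (0:ℝ)..2, r / (r ^ 2 + ε ^ 2) = Real.log ((4 + ε ^ 2) / ε ^ 2) / 2 := by
      rw [intervalIntegral.integral_eq_sub_of_hasDerivAt (fun r _ => hd r)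
        (hcont.intervalIntegrable _ _), Real.log_div (by positivity) (by positivity)]
      norm_num; ring
    rw [← e1, intervalIntegral.integral_of_le (by norm_num), ofReal_integral_eq_lintegral_ofReal
      ((intervalIntegrable_iff_integrableOn_Ioc_of_le (by norm_num)).1
        (hcont.intervalIntegrable _ _))
      (by
        filter_upwards [ae_restrict_mem measurableSet_Ioc] with r hr
        have := hr.1
        simp only [Pi.zero_apply]; positivity)]
    rw [← lintegral_indicator measurableSet_Ioi, ← lintegral_indicator measurableSet_Ioc]
    refine lintegral_mono fun r => ?_
    by_cases hr : r ∈ Ioi (0:ℝ)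
    · rw [indicator_of_mem hr]
      have hrp : 0 < r := hr
      have hn : ‖(r * Complex.exp (θ * Complex.I) : ℂ)‖ = r := by
        rw [norm_mul, Complex.norm_exp_ofReal_mul_I, mul_one, Complex.norm_real, Real.norm_of_nonneg hrp.le]
      by_cases hr2 : r < 2
      · rw [indicator_of_mem (show r ∈ Ioc (0:ℝ) 2 from ⟨hrp, hr2.le⟩), indicator_of_mem (by rw [mem_ball, dist_zero_right, hn]; exact hr2),
          hn, ← ENNReal.ofReal_mul hrp.le]
        refine ENNReal.ofReal_le_ofReal (le_of_eq (by ring))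
      · rw [indicator_of_notMem (s := ball (0:ℂ) 2) (by rw [mem_ball, dist_zero_right, hn]; exact hr2)]
        simp
    · rw [indicator_of_notMem hr]; simp
  calc _ ≤ ∫⁻ θ in Ioo (-Real.pi) Real.pi, ENNReal.ofReal (Real.log ((4 + ε ^ 2) / ε ^ 2) / 2) :=
        lintegral_mono fun θ => hin θ
    _ = _ := by
      rw [setLIntegral_const, Real.volume_Ioo, mul_comm, ← ENNReal.ofReal_mul (by linarith [Real.pi_pos])]
      congr 1; ring


def AnnS : Set ℂ := {z | 1 / 2 < ‖z‖ ∧ ‖z‖ < 1}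

theorem isOpen_AnnS : IsOpen AnnS :=
  (isOpen_lt continuous_const continuous_norm).inter (isOpen_lt continuous_norm continuous_const)

noncomputable def annWeight (f : ℂ → ℂ) (ε : ℝ) : ℂ → ENNReal :=
  AnnS.indicator fun z => ENNReal.ofReal (‖deriv f z‖ ^ 2) * ENNReal.ofReal (1 / (‖f z‖ ^ 2 + ε ^ 2))

open MeasureTheory in
theorem annWeight_measurable {f : ℂ → ℂ} (hf : DifferentiableOn ℂ f AnnS) {ε : ℝ} (hε : 0 < ε) :
    Measurable (annWeight f ε) := by
  classical
  have h1 : ContinuousOn (fun z => ENNReal.ofReal (‖deriv f z‖ ^ 2 * (1 / (‖f z‖ ^ 2 + ε ^ 2)))) AnnS := by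
    refine ENNReal.continuous_ofReal.comp_continuousOn ?_
    refine (((hf.deriv isOpen_AnnS).continuousOn.norm).pow 2).mul ?_
    refine continuousOn_const.div ((hf.continuousOn.norm.pow 2).add continuousOn_const) ?_
    intro z _; positivity
  have h2 : annWeight f ε = AnnS.piecewise
      (fun z => ENNReal.ofReal (‖deriv f z‖ ^ 2 * (1 / (‖f z‖ ^ 2 + ε ^ 2)))) 0 := by
    rw [piecewise_eq_indicator]
    unfold annWeight
    congr 1
    ext z
    rw [ENNReal.ofReal_mul (by positivity)]
  rw [h2]
  exact h1.measurable_piecewise continuousOn_const isOpen_AnnS.measurableSet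

open MeasureTheory in
theorem annWeight_int {f : ℂ → ℂ} (hf : DifferentiableOn ℂ f AnnS) (hi : InjOn f AnnS)
    (hb : ∀ z ∈ AnnS, ‖f z‖ < 2) {ε : ℝ} (hε : 0 < ε) :
    ∫⁻ z, annWeight f ε z ≤ ENNReal.ofReal (2 * Real.pi * (Real.log ((4 + ε ^ 2) / ε ^ 2) / 2)) := by
  unfold annWeight
  rw [lintegral_indicator isOpen_AnnS.measurableSet,
    area_holo isOpen_AnnS hf hi (fun w => ENNReal.ofReal (1 / (‖w‖ ^ 2 + ε ^ 2)))]
  refine le_trans (lintegral_mono_set ?_) (weight_int hε)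
  rintro _ ⟨z, hz, rfl⟩
  simpa using hb z hz

theorem norm_ray (r θ : ℝ) (hr : 0 ≤ r) : ‖(r * Complex.exp (θ * Complex.I) : ℂ)‖ = r := by
  rw [norm_mul, Complex.norm_exp_ofReal_mul_I, mul_one, Complex.norm_real, Real.norm_of_nonneg hr]

open MeasureTheory in
theorem radial_est {f : ℂ → ℂ} (hf : DifferentiableOn ℂ f AnnS) {c ε : ℝ} (hε : 0 < ε) (hc : 0 < c)
    (hεc : 2 * ε ^ 2 ≤ c ^ 2) (θ : ℝ) {R : ℝ} (hR : 3 / 4 < R) (hR1 : R < 1)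
    (h1 : c ≤ ‖f ((3 / 4 : ℝ) * Complex.exp (θ * Complex.I))‖)
    (h2 : ‖f (R * Complex.exp (θ * Complex.I))‖ ≤ ε) :
    ENNReal.ofReal (3 * (Real.log (c ^ 2 / (2 * ε ^ 2)) / 2) ^ 2) ≤
      ∫⁻ r in Ioi (0:ℝ), ENNReal.ofReal r * annWeight f ε (r * Complex.exp (θ * Complex.I)) := by
  set e := Complex.exp (θ * Complex.I) with he
  have hne : ‖e‖ = 1 := Complex.norm_exp_ofReal_mul_I θ
  have hmem : ∀ r ∈ Icc (3 / 4 : ℝ) R, (r * e : ℂ) ∈ AnnS := by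
    intro r hr
    have := norm_ray r θ (by linarith [hr.1])
    rw [← he] at this
    constructor
    · rw [this]; linarith [hr.1]
    · rw [this]; linarith [hr.2]
  set p : ℝ → ℂ := fun r => f (r * e) with hp
  set p' : ℝ → ℂ := fun r => deriv f (r * e) * e with hp'
  have hpd : ∀ r ∈ Icc (3 / 4 : ℝ) R, HasDerivAt p (p' r) r := by
    intro r hr
    have h3 := (hf.differentiableAt (isOpen_AnnS.mem_nhds (hmem r hr))).hasDerivAt
    have h4 : HasDerivAt (fun r : ℝ => (r * e : ℂ)) e r := by
      simpa using (Complex.ofRealCLM.hasDerivAt (x := r)).mul_const e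
    exact h3.comp r h4
  have hre : ContinuousOn (fun r : ℝ => (r * e : ℂ)) (Icc (3 / 4) R) := by fun_prop
  have hpc : ContinuousOn p (Icc (3 / 4) R) := fun r hr => (hpd r hr).continuousAt.continuousWithinAt
  have hpc' : ContinuousOn p' (Icc (3 / 4) R) :=
    ((hf.deriv isOpen_AnnS).continuousOn.comp hre hmem).mul continuousOn_const
  set Y : ℝ → ℝ := fun r => Real.log (‖p r‖ ^ 2 + ε ^ 2) / 2 with hY
  set Y' : ℝ → ℝ := fun r => inner ℝ (p r) (p' r) / (‖p r‖ ^ 2 + ε ^ 2) with hY'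
  set u : ℝ → ℝ := fun r => ‖p' r‖ / Real.sqrt (‖p r‖ ^ 2 + ε ^ 2) with hu
  have hcs := cs_curve (a := 3 / 4) (b := R) hR.le (Y := Y) (Y' := Y') (u := u)
    (by
      intro r hr
      have h5 : HasDerivAt (fun r => ‖p r‖ ^ 2 + ε ^ 2) (2 * inner ℝ (p r) (p' r)) r :=
        ((hpd r hr).norm_sq).add_const _
      refine ((h5.log (by positivity)).div_const 2).congr_deriv ?_
      simp only [hY']; ring)
    (by
      refine (hpc.inner hpc').div ((hpc.norm.pow 2).add continuousOn_const) ?_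
      intro r _; positivity)
    (by
      refine hpc'.norm.div (Real.continuous_sqrt.comp_continuousOn
        ((hpc.norm.pow 2).add continuousOn_const)) ?_
      intro r _
      have : 0 < ‖p r‖ ^ 2 + ε ^ 2 := by positivity
      exact (Real.sqrt_pos.2 this).ne')
    (by
      intro r _
      have hpos : 0 < ‖p r‖ ^ 2 + ε ^ 2 := by positivity
      simp only [hY', hu]
      rw [norm_div, Real.norm_of_nonneg hpos.le, div_le_div_iff₀ hpos (Real.sqrt_pos.2 hpos)]
      have h6 := norm_inner_le_norm (𝕜 := ℝ) (p r) (p' r)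
      have h7 : ‖p r‖ ≤ Real.sqrt (‖p r‖ ^ 2 + ε ^ 2) := by
        refine Real.le_sqrt_of_sq_le ?_
        nlinarith [sq_nonneg ε]
      have h8 := Real.mul_self_sqrt hpos.le
      set q := Real.sqrt (‖p r‖ ^ 2 + ε ^ 2)
      have hq : 0 ≤ q := Real.sqrt_nonneg _
      rw [← h8]
      calc ‖(inner ℝ (p r) (p' r) : ℝ)‖ * q ≤ (‖p r‖ * ‖p' r‖) * q := by gcongr
        _ ≤ (q * ‖p' r‖) * q := by gcongr
        _ = _ := by ring)
  have hLg0 : 0 ≤ Real.log (c ^ 2 / (2 * ε ^ 2)) / 2 := by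
    have : 1 ≤ c ^ 2 / (2 * ε ^ 2) := by rw [le_div_iff₀ (by positivity)]; linarith
    have := Real.log_nonneg this
    linarith
  have hgap : Real.log (c ^ 2 / (2 * ε ^ 2)) / 2 ≤ ‖Y R - Y (3 / 4)‖ := by
    rw [norm_sub_rev]
    refine le_trans ?_ (le_abs_self _)
    have e1 : Real.log (c ^ 2) ≤ Real.log (‖p (3 / 4)‖ ^ 2 + ε ^ 2) := by
      refine Real.log_le_log (by positivity) ?_
      have : c ^ 2 ≤ ‖p (3 / 4)‖ ^ 2 := pow_le_pow_left₀ hc.le (by simpa [hp] using h1) 2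
      nlinarith [sq_nonneg ε]
    have e2 : Real.log (‖p R‖ ^ 2 + ε ^ 2) ≤ Real.log (2 * ε ^ 2) := by
      refine Real.log_le_log (by positivity) ?_
      have : ‖p R‖ ^ 2 ≤ ε ^ 2 := pow_le_pow_left₀ (norm_nonneg _) h2 2
      linarith
    rw [Real.log_div (by positivity) (by positivity)]
    simp only [hY]; linarith
  have hb : ENNReal.ofReal (3 / 4) * ∫⁻ x in Ioc (3 / 4) R, ENNReal.ofReal (u x ^ 2) ≤
      ∫⁻ r in Ioi (0:ℝ), ENNReal.ofReal r * annWeight f ε (r * e) := by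
    rw [← lintegral_const_mul' _ _ ENNReal.ofReal_ne_top]
    refine le_trans ?_ (lintegral_mono_set (s := Ioc (3 / 4) R) fun x hx => ?_)
    · refine setLIntegral_mono' measurableSet_Ioc fun r hr => ?_
      have hrm := hmem r (Ioc_subset_Icc_self hr)
      unfold annWeight
      rw [indicator_of_mem hrm]
      refine mul_le_mul' (ENNReal.ofReal_le_ofReal hr.1.le) (le_of_eq ?_)
      rw [← ENNReal.ofReal_mul (by positivity)]
      congr 1
      simp only [hu, hp', hp]
      rw [div_pow, Real.sq_sqrt (by positivity), norm_mul, hne]; ring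
    · exact lt_trans (by norm_num) hx.1
  refine le_trans ?_ hb
  calc ENNReal.ofReal (3 * (Real.log (c ^ 2 / (2 * ε ^ 2)) / 2) ^ 2)
      ≤ ENNReal.ofReal (3 * ‖Y R - Y (3 / 4)‖ ^ 2) := by
        refine ENNReal.ofReal_le_ofReal ?_
        gcongr
    _ = ENNReal.ofReal 3 * ENNReal.ofReal (‖Y R - Y (3 / 4)‖ ^ 2) := ENNReal.ofReal_mul (by norm_num)
    _ ≤ ENNReal.ofReal 3 * (ENNReal.ofReal (R - 3 / 4) * ∫⁻ x in Ioc (3 / 4) R, ENNReal.ofReal (u x ^ 2)) := by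
        gcongr
    _ ≤ ENNReal.ofReal 3 * (ENNReal.ofReal (1 / 4) * ∫⁻ x in Ioc (3 / 4) R, ENNReal.ofReal (u x ^ 2)) := by
        gcongr; linarith
    _ = _ := by
        rw [← mul_assoc, ← ENNReal.ofReal_mul (by norm_num)]; norm_num

theorem eps_choice (c C δ : ℝ) (hc : 0 < c) (hC : 0 < C) (hδ : 0 < δ) (m : ℝ) (hm : 0 < m) :
    ∃ ε : ℝ, 0 < ε ∧ ε < m ∧ 2 * ε ^ 2 ≤ c ^ 2 ∧
      C * Real.log ((4 + ε ^ 2) / ε ^ 2) ≤ δ * (Real.log (c ^ 2 / (2 * ε ^ 2)) / 2) ^ 2 ∧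
      0 < Real.log (c ^ 2 / (2 * ε ^ 2)) / 2 := by
  set k := Real.log (c ^ 2 / 2) / 2 with hk
  set x := max (max (2 * |k| + 1) (12 * C / δ)) (max 3 (-Real.log m + 1)) with hx
  have hx1 : 2 * |k| + 1 ≤ x := (le_max_left _ _).trans (le_max_left _ _)
  have hx2 : 12 * C / δ ≤ x := (le_max_right _ _).trans (le_max_left _ _)
  have hx3 : 3 ≤ x := (le_max_left _ _).trans (le_max_right _ _)
  have hx4 : -Real.log m + 1 ≤ x := (le_max_right _ _).trans (le_max_right _ _)
  have hxk : x / 2 ≤ x + k := by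
    have := neg_abs_le k; linarith [abs_nonneg k]
  have hg : Real.log (c ^ 2 / (2 * Real.exp (-x) ^ 2)) / 2 = x + k := by
    have : c ^ 2 / (2 * Real.exp (-x) ^ 2) = (c ^ 2 / 2) / Real.exp (-x) ^ 2 := by field_simp
    rw [this, Real.log_div (by positivity) (by positivity), Real.log_pow, Real.log_exp]
    push_cast; simp only [hk]; ring
  refine ⟨Real.exp (-x), Real.exp_pos _, ?_, ?_, ?_, ?_⟩
  · rw [← Real.lt_log_iff_exp_lt hm]; linarith
  · have h1 : 0 ≤ Real.log (c ^ 2 / (2 * Real.exp (-x) ^ 2)) := by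
      have : 0 ≤ x + k := by linarith
      linarith
    have h2 : 1 ≤ c ^ 2 / (2 * Real.exp (-x) ^ 2) := by
      by_contra hlt
      push Not at hlt
      have := Real.log_neg (by positivity) hlt
      linarith
    rw [le_div_iff₀ (by positivity)] at h2; linarith
  · rw [hg]
    have h1 : Real.log ((4 + Real.exp (-x) ^ 2) / Real.exp (-x) ^ 2) ≤ 3 * x := by
      rw [Real.log_div (by positivity) (by positivity), Real.log_pow, Real.log_exp]
      have h2 : Real.exp (-x) ^ 2 ≤ 1 := by
        have : Real.exp (-x) ≤ 1 := Real.exp_le_one_iff.2 (by linarith)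
        exact pow_le_one₀ (Real.exp_pos _).le this
      have h3 : Real.log (4 + Real.exp (-x) ^ 2) ≤ 3 := by
        rw [Real.log_le_iff_le_exp (by positivity)]
        have := Real.quadratic_le_exp_of_nonneg (show (0:ℝ) ≤ 3 by norm_num)
        linarith
      push_cast; linarith
    have h4 : 12 * C ≤ x * δ := by rwa [div_le_iff₀ hδ] at hx2
    have h5 : (x / 2) ^ 2 ≤ (x + k) ^ 2 := pow_le_pow_left₀ (by linarith) hxk 2
    calc _ ≤ C * (3 * x) := by gcongr
      _ ≤ δ * (x / 2) ^ 2 := by nlinarith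
      _ ≤ _ := by gcongr
  · rw [hg]; linarith

open MeasureTheory in
theorem diam_aux {f : ℂ → ℂ} (hf : DifferentiableOn ℂ f AnnS) (hi : InjOn f AnnS)
    (hb : ∀ z ∈ AnnS, ‖f z‖ < 2) {c ε : ℝ} (hε : 0 < ε) (hc : 0 < c)
    (hεc : 2 * ε ^ 2 ≤ c ^ 2) (hcore : ∀ z, ‖z‖ = 3 / 4 → c ≤ ‖f z‖)
    {A : Set ℂ} (hA : IsPreconnected A) (hA1 : ∀ z ∈ A, 3 / 4 < ‖z‖ ∧ ‖z‖ < 1 ∧ ‖f z‖ ≤ ε)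
    {x : ℝ} (hx : 0 < x) (hxA : (x:ℂ) ∈ A) {z : ℂ} (hz : z ∈ A) :
    |Complex.arg z| * (3 * (Real.log (c ^ 2 / (2 * ε ^ 2)) / 2) ^ 2) ≤
      2 * (2 * Real.pi * (Real.log ((4 + ε ^ 2) / ε ^ 2) / 2)) := by
  set g := 3 * (Real.log (c ^ 2 / (2 * ε ^ 2)) / 2) ^ 2 with hg
  set β := |Complex.arg z| with hβ
  have hβπ : β ≤ Real.pi := Complex.abs_arg_le_pi z
  set J : ℝ → ENNReal := fun θ => ∫⁻ r in Ioi (0:ℝ),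
    ENNReal.ofReal r * annWeight f ε (r * Complex.exp (θ * Complex.I)) with hJ
  have hJm : Measurable J :=
    (polar_measurable (annWeight_measurable hf hε)).lintegral_prod_left'
  have hA0 : ∀ w ∈ A, w ≠ 0 := by
    rintro w hw rfl
    have := (hA1 0 hw).1; simp at this; linarith
  have hpt : ∀ θ ∈ Ioo 0 β, ENNReal.ofReal g ≤ J θ + J (-θ) := by
    intro θ hθ
    have hcont : ContinuousOn (fun w : ℂ => w.re / ‖w‖) A :=
      Complex.continuous_re.continuousOn.div continuous_norm.continuousOn
        fun w hw => norm_ne_zero_iff.2 (hA0 w hw)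
    have h1 : (fun w : ℂ => w.re / ‖w‖) (x:ℂ) = 1 := by
      simp [abs_of_pos hx, hx.ne']
    have hcosw : ∀ w ∈ A, w.re / ‖w‖ = Real.cos |Complex.arg w| := by
      intro w hw
      rw [Real.cos_abs, Complex.cos_arg (hA0 w hw)]
    have h2 : Real.cos θ ∈ Icc ((fun w : ℂ => w.re / ‖w‖) z) ((fun w : ℂ => w.re / ‖w‖) (x:ℂ)) := by
      rw [h1]
      refine ⟨?_, Real.cos_le_one _⟩
      simp only [hcosw z hz]
      exact (Real.strictAntiOn_cos.antitoneOn) ⟨hθ.1.le, hθ.2.le.trans hβπ⟩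
        ⟨abs_nonneg _, hβπ⟩ hθ.2.le
    obtain ⟨w, hw, hwe⟩ := hA.intermediate_value hz hxA hcont h2
    simp only [hcosw w hw] at hwe
    have h3 : |Complex.arg w| = θ := Real.injOn_cos ⟨abs_nonneg _, Complex.abs_arg_le_pi w⟩
      ⟨hθ.1.le, hθ.2.le.trans hβπ⟩ hwe
    have hr := radial_est hf hε hc hεc (Complex.arg w) (hA1 w hw).1 (hA1 w hw).2.1
      (hcore _ (norm_ray _ _ (by norm_num))) (by
        rw [Complex.norm_mul_exp_arg_mul_I]; exact (hA1 w hw).2.2)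
    rcases abs_eq (hθ.1.le) |>.1 h3 with h4 | h4
    · rw [h4] at hr; exact hr.trans (le_add_right le_rfl)
    · rw [h4] at hr
      exact hr.trans (le_add_left le_rfl)
  have hyint : ENNReal.ofReal (β * g) ≤
      2 * ENNReal.ofReal (2 * Real.pi * (Real.log ((4 + ε ^ 2) / ε ^ 2) / 2)) := by
    have hW := annWeight_int hf hi hb hε
    rw [polar_lint2 (annWeight_measurable hf hε)] at hW
    calc ENNReal.ofReal (β * g) = ∫⁻ θ in Ioo 0 β, ENNReal.ofReal g := by
          rw [setLIntegral_const, Real.volume_Ioo, sub_zero, mul_comm,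
            ENNReal.ofReal_mul (by positivity), mul_comm]
      _ ≤ ∫⁻ θ in Ioo 0 β, (J θ + J (-θ)) := setLIntegral_mono' measurableSet_Ioo hpt
      _ = (∫⁻ θ in Ioo 0 β, J θ) + ∫⁻ θ in Ioo 0 β, J (-θ) := lintegral_add_left hJm _
      _ ≤ (∫⁻ θ in Ioo (-Real.pi) Real.pi, J θ) + ∫⁻ θ in Ioo (-Real.pi) Real.pi, J θ := by
          refine add_le_add (lintegral_mono_set (Ioo_subset_Ioo (by linarith [Real.pi_pos]) hβπ)) ?_
          have : ∫⁻ θ in Ioo 0 β, J (-θ) = ∫⁻ θ in Ioo (-β) 0, J θ := by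
            rw [← lintegral_indicator measurableSet_Ioo, ← lintegral_indicator measurableSet_Ioo,
              ← lintegral_neg_eq_self]
            refine lintegral_congr fun θ => ?_
            by_cases hθ : -θ ∈ Ioo 0 β
            · rw [indicator_of_mem hθ, indicator_of_mem (by constructor <;> linarith [hθ.1, hθ.2]), neg_neg]
            · rw [indicator_of_notMem hθ, indicator_of_notMem]
              intro h; exact hθ ⟨by linarith [h.2], by linarith [h.1]⟩
          rw [this]
          exact lintegral_mono_set (Ioo_subset_Ioo (by linarith) (by linarith [Real.pi_pos]))
      _ ≤ _ := by rw [← two_mul]; gcongr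
  have hlog : 0 ≤ Real.log ((4 + ε ^ 2) / ε ^ 2) := by
    refine Real.log_nonneg ?_
    rw [le_div_iff₀ (by positivity)]; linarith
  rw [show (2:ENNReal) = ENNReal.ofReal 2 by simp, ← ENNReal.ofReal_mul (by norm_num)] at hyint
  rwa [ENNReal.ofReal_le_ofReal_iff (by have := Real.pi_pos; positivity)] at hyint

theorem diam_lemma (c δ : ℝ) (hc : 0 < c) (hδ : 0 < δ) (m : ℝ) (hm : 0 < m) :
    ∃ ε : ℝ, 0 < ε ∧ ε < m ∧ ∀ f : ℂ → ℂ, DifferentiableOn ℂ f AnnS → InjOn f AnnS →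
      (∀ z ∈ AnnS, ‖f z‖ < 2) → (∀ z, ‖z‖ = 3 / 4 → c ≤ ‖f z‖) →
      ∀ A : Set ℂ, IsPreconnected A → (∀ z ∈ A, 3 / 4 < ‖z‖ ∧ ‖z‖ < 1 ∧ ‖f z‖ ≤ ε) →
      ∀ z1 ∈ A, ∀ z2 ∈ A, ‖z1 / (‖z1‖ : ℂ) - z2 / (‖z2‖ : ℂ)‖ ≤ δ := by
  obtain ⟨ε, hε, hεm, hεc, h1, h2⟩ := eps_choice c (2 * Real.pi) (3 * δ) hc (by have := Real.pi_pos; positivity) (by positivity) m hm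
  refine ⟨ε, hε, hεm, fun f hf hi hb hcore A hA hA1 z1 hz1 z2 hz2 => ?_⟩
  have hn1 : 0 < ‖z1‖ := by linarith [(hA1 z1 hz1).1]
  have hn2 : 0 < ‖z2‖ := by linarith [(hA1 z2 hz2).1]
  have hz1n : (‖z1‖ : ℂ) ≠ 0 := by exact_mod_cast hn1.ne'
  have hz2n : (‖z2‖ : ℂ) ≠ 0 := by exact_mod_cast hn2.ne'
  have hz10 : z1 ≠ 0 := norm_pos_iff.1 hn1
  set e : ℂ := z1 / ‖z1‖ with he
  have hne : ‖e‖ = 1 := by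
    rw [he, norm_div, Complex.norm_real, norm_norm, div_self hn1.ne']
  have he0 : e ≠ 0 := by rw [← norm_pos_iff, hne]; norm_num
  have hmap : ∀ z ∈ AnnS, e * z ∈ AnnS := by
    intro z hz
    refine ⟨?_, ?_⟩
    · rw [norm_mul, hne, one_mul]; exact hz.1
    · rw [norm_mul, hne, one_mul]; exact hz.2
  have := diam_aux (f := fun z => f (e * z)) (A := (fun z => e⁻¹ * z) '' A) (x := ‖z1‖) (z := e⁻¹ * z2)
    (c := c) (ε := ε)
    (hf.comp (by fun_prop) hmap)
    (fun a ha b hb hab => mul_left_cancel₀ he0 (hi (hmap a ha) (hmap b hb) hab))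
    (fun z hz => hb _ (hmap z hz)) hε hc hεc (fun z hz => hcore _ (by rw [norm_mul, hne, hz]; norm_num))
    (hA.image _ (by fun_prop))
    (by
      rintro _ ⟨z, hz, rfl⟩
      have e1 : e * (e⁻¹ * z) = z := by field_simp
      simp only [e1]
      rw [norm_mul, norm_inv, hne, inv_one, one_mul]
      exact hA1 z hz) hn1 ⟨z1, hz1, by simp only [he]; field_simp⟩ ⟨z2, hz2, rfl⟩
  set β := Complex.arg (e⁻¹ * z2) with hβ
  have hβδ : |β| ≤ δ := by
    set q := (Real.log (c ^ 2 / (2 * ε ^ 2)) / 2) with hq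
    have hq2 : 0 < q ^ 2 := by positivity
    have : |β| * (3 * q ^ 2) ≤ δ * (3 * q ^ 2) := by nlinarith
    exact le_of_mul_le_mul_right this (by positivity)
  have e2 := Complex.norm_mul_exp_arg_mul_I (e⁻¹ * z2)
  rw [← hβ, norm_mul, norm_inv, hne, inv_one, one_mul] at e2
  have e3 : z2 / (‖z2‖ : ℂ) = e * Complex.exp (β * Complex.I) := by
    rw [div_eq_iff hz2n]
    have : z2 = e * (e⁻¹ * z2) := by field_simp
    rw [this]
    conv_rhs => rw [← this]
    rw [← e2]; ring
  rw [e3]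
  have e4 : e - e * Complex.exp (β * Complex.I) = -(e * (Complex.exp (Complex.I * β) - 1)) := by
    rw [mul_comm Complex.I]; ring
  rw [e4, norm_neg, norm_mul, hne, one_mul]
  exact Real.norm_exp_I_mul_ofReal_sub_one_le.trans hβδ


theorem norm_sq_arc (r θ : ℝ) :
    ‖(1 - r * Complex.exp (θ * Complex.I) : ℂ)‖ ^ 2 = 1 - 2 * r * Real.cos θ + r ^ 2 := by
  rw [← Complex.normSq_eq_norm_sq, Complex.normSq_apply]
  simp only [Complex.sub_re, Complex.one_re, Complex.re_ofReal_mul, Complex.exp_ofReal_mul_I_re,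
    Complex.sub_im, Complex.one_im, Complex.im_ofReal_mul, Complex.exp_ofReal_mul_I_im]
  have := Real.sin_sq_add_cos_sq θ
  linear_combination r ^ 2 * this

theorem arc_mem {r θ : ℝ} (hr : 0 < r) (hr1 : r < 1 / 2) (hc : r / 2 < Real.cos θ) :
    (1 - r * Complex.exp (θ * Complex.I) : ℂ) ∈ AnnS := by
  constructor
  · have h1 := norm_sub_norm_le (1:ℂ) (r * Complex.exp (θ * Complex.I))
    rw [norm_ray r θ hr.le, norm_one] at h1
    linarith
  · have h1 := norm_sq_arc r θ
    have h2 : ‖(1 - r * Complex.exp (θ * Complex.I) : ℂ)‖ ^ 2 < 1 ^ 2 := by rw [h1]; nlinarith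
    exact lt_of_pow_lt_pow_left₀ 2 (by norm_num) h2

noncomputable def annD (f : ℂ → ℂ) : ℂ → ENNReal :=
  AnnS.indicator fun z => ENNReal.ofReal (‖deriv f z‖ ^ 2)

open MeasureTheory in
theorem annD_measurable (f : ℂ → ℂ) : Measurable (annD f) := by
  refine Measurable.indicator ?_ isOpen_AnnS.measurableSet
  exact ENNReal.measurable_ofReal.comp ((measurable_deriv f).norm.pow_const 2)

open MeasureTheory in
theorem arc_seg {f : ℂ → ℂ} (hf : DifferentiableOn ℂ f AnnS) {r : ℝ} (hr : 0 < r) (hr1 : r < 1 / 2)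
    {a b : ℝ} (hab : a ≤ b) (hba : b - a ≤ Real.pi / 2) (ha : -Real.pi / 2 ≤ a) (hb : b ≤ Real.pi / 2)
    (hc : ∀ θ ∈ Icc a b, r / 2 < Real.cos θ) :
    ENNReal.ofReal (‖f (1 - r * Complex.exp (b * Complex.I)) - f (1 - r * Complex.exp (a * Complex.I))‖ ^ 2) ≤
     ENNReal.ofReal (Real.pi / 2 * r) * ∫⁻ θ in Ioo (-Real.pi) Real.pi,
      ENNReal.ofReal r * annD f (1 - r * Complex.exp (θ * Complex.I)) := by
  have hmem : ∀ θ ∈ Icc a b, (1 - r * Complex.exp (θ * Complex.I) : ℂ) ∈ AnnS :=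
    fun θ hθ => arc_mem hr hr1 (hc θ hθ)
  have hcont : ContinuousOn (fun θ : ℝ => (1 - r * Complex.exp (θ * Complex.I) : ℂ)) (Icc a b) := by
    fun_prop
  have hdc : ContinuousOn (fun θ : ℝ => deriv f (1 - r * Complex.exp (θ * Complex.I))) (Icc a b) :=
    (hf.deriv isOpen_AnnS).continuousOn.comp hcont hmem
  have h1 := cs_curve hab (Y := fun θ : ℝ => f (1 - r * Complex.exp (θ * Complex.I)))
    (Y' := fun θ : ℝ => deriv f (1 - r * Complex.exp (θ * Complex.I)) *
      (-(r * (Complex.exp (θ * Complex.I) * Complex.I))))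
    (u := fun θ : ℝ => ‖deriv f (1 - r * Complex.exp (θ * Complex.I))‖ * r)
    (by
      intro θ hθ
      have h3 := (hf.differentiableAt (isOpen_AnnS.mem_nhds (hmem θ hθ))).hasDerivAt
      have h4 : HasDerivAt (fun θ : ℝ => (1 - r * Complex.exp (θ * Complex.I) : ℂ))
          (-(r * (Complex.exp (θ * Complex.I) * Complex.I))) θ := by
        have h5 : HasDerivAt (fun θ : ℝ => (θ * Complex.I : ℂ)) Complex.I θ := by
          simpa using (Complex.ofRealCLM.hasDerivAt (x := θ)).mul_const Complex.I
        exact (h5.cexp.const_mul (r:ℂ)).const_sub 1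
      exact h3.comp θ h4)
    (hdc.mul (by fun_prop))
    (hdc.norm.mul continuousOn_const)
    (by
      intro θ _
      rw [norm_mul, norm_neg, norm_mul, norm_mul, Complex.norm_exp_ofReal_mul_I, Complex.norm_real,
        Real.norm_of_nonneg hr.le]
      simp)
  refine h1.trans ?_
  have h2 : ∫⁻ θ in Ioc a b, ENNReal.ofReal ((‖deriv f (1 - r * Complex.exp (θ * Complex.I))‖ * r) ^ 2) ≤
      ENNReal.ofReal r * ∫⁻ θ in Ioo (-Real.pi) Real.pi,
        ENNReal.ofReal r * annD f (1 - r * Complex.exp (θ * Complex.I)) := by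
    rw [← lintegral_const_mul' _ _ ENNReal.ofReal_ne_top]
    refine le_trans ?_ (lintegral_mono_set (s := Ioc a b) fun x hx => ?_)
    · refine setLIntegral_mono' measurableSet_Ioc fun θ hθ => ?_
      unfold annD
      rw [indicator_of_mem (hmem θ (Ioc_subset_Icc_self hθ)), ← ENNReal.ofReal_mul hr.le, ← ENNReal.ofReal_mul hr.le]
      exact ENNReal.ofReal_le_ofReal (le_of_eq (by ring))
    · have := Real.pi_pos
      exact ⟨by linarith [hx.1], by linarith [hx.2]⟩
  calc _ ≤ ENNReal.ofReal (Real.pi / 2) * _ := mul_le_mul' (ENNReal.ofReal_le_ofReal hba) h2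
    _ = _ := by rw [← mul_assoc, ← ENNReal.ofReal_mul (by have := Real.pi_pos; positivity)]

open MeasureTheory in
theorem lind_i {f : ℂ → ℂ} (hf : DifferentiableOn ℂ f AnnS) (hi : InjOn f AnnS)
    (hb : ∀ z ∈ AnnS, ‖f z‖ < 2) {σ : ℝ → ℂ} (hσ : ContinuousOn σ (Ioc 0 1))
    (hσ1 : ∀ s ∈ Ioc (0:ℝ) 1, ‖σ s‖ < 1) (hlim : Tendsto σ (𝓝[>] 0) (𝓝 1))
    (hflim : Tendsto (fun s => f (σ s)) (𝓝[>] 0) (𝓝 0)) {ε : ℝ} (hε : 0 < ε) :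
    ∃ ρ0 : ℝ, 0 < ρ0 ∧ ∀ ρ : ℝ, 0 < ρ → ρ < ρ0 → ∃ r ∈ Icc ρ (2 * ρ), ‖f (1 - r)‖ ≤ 2 * ε := by
  have hfin : ∫⁻ z, annD f z ≠ ⊤ := by
    unfold annD
    rw [lintegral_indicator isOpen_AnnS.measurableSet]
    have := area_holo isOpen_AnnS hf hi (fun _ => 1)
    simp only [mul_one, lintegral_const, one_mul] at this
    rw [this, Measure.restrict_apply_univ]
    refine ((measure_mono ?_).trans_lt (measure_ball_lt_top (x := (0:ℂ)) (r := 2))).ne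
    rintro _ ⟨z, hz, rfl⟩
    simpa using hb z hz
  have hvol : Tendsto (volume ∘ fun ρ : ℝ => ball (1:ℂ) (2 * ρ)) (𝓝[>] 0) (𝓝 0) := by
    have h1 : Tendsto (fun ρ : ℝ => ENNReal.ofReal (2 * ρ) ^ 2 * NNReal.pi) (𝓝[>] 0)
        (𝓝 (ENNReal.ofReal (2 * 0) ^ 2 * NNReal.pi)) := by
      refine ENNReal.Tendsto.mul_const ?_ (Or.inr ENNReal.coe_ne_top)
      refine ENNReal.Tendsto.pow ?_
      exact ((ENNReal.continuous_ofReal.comp (continuous_const.mul continuous_id)).tendsto 0).mono_left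
        nhdsWithin_le_nhds
    simpa [Function.comp_def, Complex.volume_ball] using h1
  have hsm := tendsto_setLIntegral_zero hfin hvol
  have hsm2 : ∀ᶠ ρ : ℝ in 𝓝[>] 0, ∫⁻ z in ball (1:ℂ) (2 * ρ), annD f z < ENNReal.ofReal (ε ^ 2 / 4) :=
    hsm.eventually (gt_mem_nhds (by simp; positivity))
  obtain ⟨s0, hs0, hs01⟩ : ∃ s0 : ℝ, 0 < s0 ∧ s0 ≤ 1 ∧ ∀ s ∈ Ioc 0 s0, ‖f (σ s)‖ ≤ ε := by
    have h1 : ∀ᶠ s in 𝓝[>] (0:ℝ), ‖f (σ s)‖ < ε := by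
      have := hflim.norm
      rw [norm_zero] at this
      exact this.eventually (gt_mem_nhds hε)
    obtain ⟨u, hu, hu2⟩ := mem_nhdsGT_iff_exists_Ioo_subset.1 h1
    have hu : 0 < u := hu
    refine ⟨min 1 (u / 2), by positivity, min_le_left _ _, fun s hs => le_of_lt (hu2 ⟨hs.1, ?_⟩)⟩
    have := hs.2.trans (min_le_right _ _)
    linarith
  obtain ⟨hs01, hs02⟩ := hs01
  have hd : 0 < ‖σ s0 - 1‖ := by
    rw [norm_pos_iff, sub_ne_zero]
    intro h
    have := hσ1 s0 ⟨hs0, hs01⟩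
    rw [h, norm_one] at this; exact lt_irrefl _ this
  obtain ⟨ρ1, hρ1, hρ2⟩ := mem_nhdsGT_iff_exists_Ioo_subset.1 hsm2
  have hρ1 : 0 < ρ1 := hρ1
  refine ⟨min ρ1 (min (1 / 4) (‖σ s0 - 1‖ / 2)), by positivity, fun ρ hρ hρ0 => ?_⟩
  have hA : ρ < ρ1 := hρ0.trans_le (min_le_left _ _)
  have hB : ρ < 1 / 4 := hρ0.trans_le ((min_le_right _ _).trans (min_le_left _ _))
  have hC : ρ < ‖σ s0 - 1‖ / 2 := hρ0.trans_le ((min_le_right _ _).trans (min_le_right _ _))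
  have hI : ∫⁻ z in ball (1:ℂ) (2 * ρ), annD f z < ENNReal.ofReal (ε ^ 2 / 4) := hρ2 ⟨hρ, hA⟩
  by_contra hcon
  push Not at hcon
  have key : ∀ r ∈ Ioo ρ (2 * ρ), ENNReal.ofReal (ε ^ 2) ≤ ENNReal.ofReal (Real.pi * ρ) *
      ∫⁻ θ in Ioo (-Real.pi) Real.pi, ENNReal.ofReal r * annD f (1 - r * Complex.exp (θ * Complex.I)) := by
    intro r hr
    have hrp : 0 < r := hρ.trans hr.1
    have hr2 : r < 1 / 2 := by linarith [hr.2]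
    obtain ⟨s, hs, hsr⟩ : ∃ s ∈ Ioc 0 s0, ‖σ s - 1‖ = r := by
      have h1 : ∀ᶠ s in 𝓝[>] (0:ℝ), ‖σ s - 1‖ < r := by
        have := (hlim.sub_const 1).norm
        rw [sub_self, norm_zero] at this
        exact this.eventually (gt_mem_nhds hrp)
      obtain ⟨s1, h2, h3⟩ := (h1.and (Ioo_mem_nhdsGT hs0)).exists
      have hc : ContinuousOn (fun s => ‖σ s - 1‖) (Icc s1 s0) :=
        ((hσ.mono fun x hx => ⟨h3.1.trans_le hx.1, hx.2.trans hs01⟩).sub continuousOn_const).norm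
      obtain ⟨s, hs, hse⟩ := intermediate_value_Icc h3.2.le hc ⟨h2.le, by linarith [hr.2]⟩
      exact ⟨s, ⟨h3.1.trans_le hs.1, hs.2⟩, hse⟩
    have hn : ‖1 - σ s‖ = r := by rw [norm_sub_rev]; exact hsr
    set θ1 := Complex.arg (1 - σ s) with hθ1
    have e1 : (1 - r * Complex.exp (θ1 * Complex.I) : ℂ) = σ s := by
      rw [← hn, Complex.norm_mul_exp_arg_mul_I]; ring
    have hcos : r / 2 < Real.cos θ1 := by
      have h1 := norm_sq_arc r θ1
      rw [e1] at h1
      have h2 := hσ1 s ⟨hs.1, hs.2.trans hs01⟩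
      have h3 : ‖σ s‖ ^ 2 < 1 := by nlinarith [norm_nonneg (σ s)]
      rw [h1] at h3
      by_contra h4
      push Not at h4
      nlinarith
    have habs : |θ1| < Real.pi / 2 := by
      by_contra h4
      push Not at h4
      have h5 := Real.cos_nonpos_of_pi_div_two_le_of_le h4 (by
        have := Complex.abs_arg_le_pi (1 - σ s); linarith [Real.pi_pos])
      rw [Real.cos_abs] at h5
      linarith
    have hcosle : ∀ θ, |θ| ≤ |θ1| → r / 2 < Real.cos θ := by
      intro θ hθ
      rw [← Real.cos_abs] at hcos
      rw [← Real.cos_abs]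
      refine hcos.trans_le (Real.strictAntiOn_cos.antitoneOn ⟨abs_nonneg _, by linarith [Real.pi_pos]⟩
        ⟨abs_nonneg _, by linarith [Real.pi_pos]⟩ hθ)
    have hfs := hs02 s hs
    have hfr := hcon r ⟨hr.1.le, hr.2.le⟩
    have hdiff : ENNReal.ofReal (ε ^ 2) ≤ ENNReal.ofReal (Real.pi / 2 * r) *
        ∫⁻ θ in Ioo (-Real.pi) Real.pi, ENNReal.ofReal r * annD f (1 - r * Complex.exp (θ * Complex.I)) := by
      rcases le_total 0 θ1 with h0 | h0
      · rw [abs_of_nonneg h0] at habs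
        have := arc_seg hf hrp hr2 h0 (by linarith) (by linarith [Real.pi_pos]) habs.le
          (fun θ hθ => hcosle θ (by rw [abs_of_nonneg hθ.1, abs_of_nonneg h0]; exact hθ.2))
        refine le_trans (ENNReal.ofReal_le_ofReal ?_) this
        rw [e1]; simp only [Complex.ofReal_zero, zero_mul, Complex.exp_zero, mul_one]
        refine pow_le_pow_left₀ hε.le ?_ 2
        have := norm_sub_norm_le (f (1 - r)) (f (σ s))
        rw [norm_sub_rev] at this; linarith
      · rw [abs_of_nonpos h0] at habs
        have := arc_seg hf hrp hr2 h0 (by linarith) (by linarith [Real.pi_pos]) (by linarith [Real.pi_pos])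
          (fun θ hθ => hcosle θ (by rw [abs_of_nonpos hθ.2, abs_of_nonpos h0]; linarith [hθ.1]))
        refine le_trans (ENNReal.ofReal_le_ofReal ?_) this
        rw [e1]; simp only [Complex.ofReal_zero, zero_mul, Complex.exp_zero, mul_one]
        refine pow_le_pow_left₀ hε.le ?_ 2
        have := norm_sub_norm_le (f (1 - r)) (f (σ s))
        linarith
    refine hdiff.trans (mul_le_mul' (ENNReal.ofReal_le_ofReal ?_) le_rfl)
    nlinarith [Real.pi_pos, hr.2]
  have hpol : ∫⁻ r in Ioo ρ (2 * ρ), ∫⁻ θ in Ioo (-Real.pi) Real.pi,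
      ENNReal.ofReal r * annD f (1 - r * Complex.exp (θ * Complex.I)) ≤ ∫⁻ z in ball (1:ℂ) (2 * ρ), annD f z := by
    rw [← lintegral_indicator measurableSet_ball,
      ← lintegral_sub_left_eq_self ((ball (1:ℂ) (2 * ρ)).indicator (annD f)) 1,
      polar_lint1 (H := fun w => (ball (1:ℂ) (2 * ρ)).indicator (annD f) (1 - w))
        (((annD_measurable f).indicator measurableSet_ball).comp (measurable_const.sub measurable_id))]
    refine le_trans ?_ (lintegral_mono_set (s := Ioo ρ (2 * ρ)) fun x hx => hρ.trans hx.1)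
    refine setLIntegral_mono' measurableSet_Ioo fun r hr => ?_
    refine lintegral_mono fun θ => ?_
    rw [indicator_of_mem]
    rw [mem_ball, dist_eq_norm, ← norm_neg]
    have : (-(1 - r * Complex.exp (θ * Complex.I) - 1) : ℂ) = r * Complex.exp (θ * Complex.I) := by ring
    rw [this, norm_ray r θ (hρ.trans hr.1).le]
    exact hr.2
  have hfinal : ENNReal.ofReal (ε ^ 2 * ρ) ≤ ENNReal.ofReal (Real.pi * ρ * (ε ^ 2 / 4)) := by
    calc ENNReal.ofReal (ε ^ 2 * ρ) = ∫⁻ r in Ioo ρ (2 * ρ), ENNReal.ofReal (ε ^ 2) := by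
          rw [setLIntegral_const, Real.volume_Ioo, ← ENNReal.ofReal_mul (by positivity)]
          congr 1; ring
      _ ≤ ∫⁻ r in Ioo ρ (2 * ρ), ENNReal.ofReal (Real.pi * ρ) *
            ∫⁻ θ in Ioo (-Real.pi) Real.pi, ENNReal.ofReal r * annD f (1 - r * Complex.exp (θ * Complex.I)) :=
          setLIntegral_mono' measurableSet_Ioo key
      _ = ENNReal.ofReal (Real.pi * ρ) * _ := lintegral_const_mul' _ _ ENNReal.ofReal_ne_top
      _ ≤ ENNReal.ofReal (Real.pi * ρ) * ENNReal.ofReal (ε ^ 2 / 4) := mul_le_mul' le_rfl (hpol.trans hI.le)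
      _ = _ := by rw [← ENNReal.ofReal_mul (by have := Real.pi_pos; positivity)]
  rw [ENNReal.ofReal_le_ofReal_iff (by have := Real.pi_pos; positivity)] at hfinal
  have h4 := Real.pi_lt_four
  have h5 : 0 < ε ^ 2 * ρ := by positivity
  nlinarith

theorem lindelof_one {f : ℂ → ℂ} (hf : DifferentiableOn ℂ f AnnS) (hi : InjOn f AnnS)
    (hb : ∀ z ∈ AnnS, ‖f z‖ < 2) (hne : ∀ z ∈ AnnS, f z ≠ 0)
    {σ : ℝ → ℂ} (hσ : ContinuousOn σ (Ioc 0 1))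
    (hσ1 : ∀ s ∈ Ioc (0:ℝ) 1, ‖σ s‖ < 1) (hlim : Tendsto σ (𝓝[>] 0) (𝓝 1))
    (hflim : Tendsto (fun s => f (σ s)) (𝓝[>] 0) (𝓝 0)) :
    Tendsto (fun r : ℝ => f r) (𝓝[<] 1) (𝓝 0) := by
  suffices h : Tendsto (fun ρ : ℝ => f (1 - ρ)) (𝓝[>] 0) (𝓝 0) by
    have h1 : Tendsto (fun r : ℝ => 1 - r) (𝓝[<] 1) (𝓝[>] 0) := by
      refine tendsto_nhdsWithin_iff.2 ⟨?_, ?_⟩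
      · have : Tendsto (fun r : ℝ => 1 - r) (𝓝 1) (𝓝 (1 - 1)) := Continuous.tendsto (by fun_prop) 1
        rw [sub_self] at this
        exact this.mono_left nhdsWithin_le_nhds
      · filter_upwards [self_mem_nhdsWithin] with r hr
        simpa using hr
    refine (h.comp h1).congr fun r => ?_
    simp
  have hwm : ∀ ρ : ℝ, 0 < ρ → ρ < 1 / 10 → ∀ z ∈ ball (0:ℂ) 1, (1 - ρ * (3 / 2 + z) : ℂ) ∈ AnnS := by
    intro ρ hρ hρ1 z hz
    have hz1 : ‖z‖ < 1 := by simpa using hz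
    have hre : |z.re| < 1 := (Complex.abs_re_le_norm z).trans_lt hz1
    have hn : ‖(3 / 2 + z : ℂ)‖ < 5 / 2 := by
      have h1 := norm_add_le (3 / 2 : ℂ) z
      have h2 : ‖(3 / 2 : ℂ)‖ = 3 / 2 := by norm_num
      linarith
    have hq : ‖(ρ * (3 / 2 + z) : ℂ)‖ = ρ * ‖(3 / 2 + z : ℂ)‖ := by
      rw [norm_mul, Complex.norm_real, Real.norm_of_nonneg hρ.le]
    constructor
    · have h1 := norm_sub_norm_le (1:ℂ) (ρ * (3 / 2 + z))
      rw [hq, norm_one] at h1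
      nlinarith
    · have h1 : ‖(1 - ρ * (3 / 2 + z) : ℂ)‖ ^ 2 = 1 - 2 * ρ * (3 / 2 + z.re) + ρ ^ 2 * ‖(3 / 2 + z : ℂ)‖ ^ 2 := by
        have e3 : ((3 / 2 + z : ℂ)).re = 3 / 2 + z.re := by simp
        have e4 : ((3 / 2 + z : ℂ)).im = z.im := by simp
        rw [← Complex.normSq_eq_norm_sq, ← Complex.normSq_eq_norm_sq, Complex.normSq_apply, Complex.normSq_apply]
        simp only [Complex.sub_re, Complex.one_re, Complex.re_ofReal_mul,
          Complex.sub_im, Complex.one_im, Complex.im_ofReal_mul, e3, e4]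
        ring
      have h2 : ‖(1 - ρ * (3 / 2 + z) : ℂ)‖ ^ 2 < 1 ^ 2 := by
        rw [h1]
        have h3 := (abs_lt.1 hre).1
        have h4 : ‖(3 / 2 + z : ℂ)‖ ^ 2 ≤ (5 / 2) ^ 2 := pow_le_pow_left₀ (norm_nonneg _) hn.le 2
        have h5 : ρ ^ 2 * ‖(3 / 2 + z : ℂ)‖ ^ 2 ≤ ρ ^ 2 * (5 / 2) ^ 2 := by gcongr
        nlinarith
      exact lt_of_pow_lt_pow_left₀ 2 (by norm_num) h2
  have hev : ∀ᶠ ρ : ℝ in 𝓝[>] 0, 0 < ρ ∧ ρ < 1 / 10 := Ioo_mem_nhdsGT (by norm_num)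
  have hmin : ∀ ρ : ℝ, ∃ r : ℝ, 0 < ρ → ρ < 1 / 10 → r ∈ Icc ρ (2 * ρ) ∧
      ∀ x ∈ Icc ρ (2 * ρ), ‖f (1 - r)‖ ≤ ‖f (1 - x)‖ := by
    intro ρ
    by_cases h : 0 < ρ ∧ ρ < 1 / 10
    · have hc : ContinuousOn (fun x : ℝ => ‖f (1 - x)‖) (Icc ρ (2 * ρ)) := by
        refine (hf.continuousOn.comp (by fun_prop) ?_).norm
        intro x hx
        show (1 - (x:ℂ)) ∈ AnnS
        constructor
        · rw [← Complex.ofReal_one, ← Complex.ofReal_sub, Complex.norm_real, Real.norm_of_nonneg (by linarith [hx.2])]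
          linarith [hx.2]
        · rw [← Complex.ofReal_one, ← Complex.ofReal_sub, Complex.norm_real, Real.norm_of_nonneg (by linarith [hx.2])]
          linarith [hx.1]
      obtain ⟨r, hr, hrm⟩ := isCompact_Icc.exists_isMinOn ⟨ρ, le_rfl, by linarith⟩ hc
      exact ⟨r, fun _ _ => ⟨hr, fun x hx => hrm hx⟩⟩
    · exact ⟨0, fun h1 h2 => absurd ⟨h1, h2⟩ h⟩
  choose r hr using hmin
  have hr0 : Tendsto (fun ρ => f (1 - r ρ)) (𝓝[>] 0) (𝓝 0) := by
    rw [tendsto_zero_iff_norm_tendsto_zero, Metric.tendsto_nhds]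
    intro ε hε
    obtain ⟨ρ0, hρ0, h1⟩ := lind_i hf hi hb hσ hσ1 hlim hflim (show 0 < ε / 4 by positivity)
    filter_upwards [hev, Ioo_mem_nhdsGT hρ0] with ρ h2 h3
    obtain ⟨x, hx, hx2⟩ := h1 ρ h3.1 h3.2
    have := (hr ρ h2.1 h2.2).2 x hx
    simp only [dist_zero_right, norm_norm]
    linarith
  refine tendsto_iff_ultrafilter _ _ _ |>.2 fun 𝒰 h𝒰 => ?_
  set F : ℝ → ℂ → ℂ := fun ρ z => f (1 - ρ * (3 / 2 + z)) with hF
  have hFd : ∀ᶠ ρ in 𝒰, DifferentiableOn ℂ (F ρ) (ball 0 1) := by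
    filter_upwards [h𝒰 hev] with ρ hρ
    exact hf.comp (by fun_prop) (hwm ρ hρ.1 hρ.2)
  obtain ⟨F0, hF0, hF0d⟩ := montel_ultra 𝒰 F hFd (by
    intro q hq
    refine ⟨2, ?_⟩
    filter_upwards [h𝒰 hev] with ρ hρ z hz
    exact (hb _ (hwm ρ hρ.1 hρ.2 z (closedBall_subset_ball hq hz))).le)
  set zz : ℝ → ℂ := fun ρ => ((r ρ / ρ - 3 / 2 : ℝ) : ℂ) with hzz
  have hzm : ∀ᶠ ρ in 𝒰, zz ρ ∈ closedBall (0:ℂ) (1 / 2) := by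
    filter_upwards [h𝒰 hev] with ρ hρ
    have := (hr ρ hρ.1 hρ.2).1
    rw [mem_closedBall, dist_zero_right, Complex.norm_real, Real.norm_eq_abs, abs_le]
    have h1 : 1 ≤ r ρ / ρ := by rw [le_div_iff₀ hρ.1]; linarith [this.1]
    have h2 : r ρ / ρ ≤ 2 := by rw [div_le_iff₀ hρ.1]; linarith [this.2]
    constructor <;> linarith
  obtain ⟨z', hz', hlim'⟩ := (isCompact_closedBall (0:ℂ) (1 / 2)).ultrafilter_le_nhds (𝒰.map zz)
    (by rw [le_principal_iff]; exact hzm)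
  have hlim' : Tendsto zz 𝒰 (𝓝 z') := hlim'
  have hsub : closedBall (0:ℂ) (1 / 2) ⊆ ball 0 1 := closedBall_subset_ball (by norm_num)
  have e1 := hF0.tendsto_comp (hF0d.continuousOn z' (hsub hz')) (hsub hz')
    (tendsto_nhdsWithin_iff.2 ⟨hlim', hzm.mono fun ρ h => hsub h⟩)
  have e2 : Tendsto (fun ρ => F ρ (zz ρ)) 𝒰 (𝓝 0) := by
    refine (hr0.mono_left h𝒰).congr' ?_
    filter_upwards [h𝒰 hev] with ρ hρ
    have hρ0 : (ρ:ℂ) ≠ 0 := by exact_mod_cast hρ.1.ne'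
    simp only [hF, hzz]
    congr 1
    push_cast
    field_simp
    ring
  have e3 : F0 z' = 0 := tendsto_nhds_unique e1 e2
  have e4 := hurwitz_ultra hFd hF0 (by
    filter_upwards [h𝒰 hev] with ρ hρ z hz
    exact hne _ (hwm ρ hρ.1 hρ.2 z hz)) (hsub hz') e3 (-1 / 2) (by rw [mem_ball, dist_zero_right]; norm_num)
  have e5 := hF0.tendsto_at (show (-1 / 2 : ℂ) ∈ ball (0:ℂ) 1 by rw [mem_ball, dist_zero_right]; norm_num)
  rw [e4] at e5
  refine e5.congr fun ρ => ?_
  simp only [hF]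
  congr 1
  ring

theorem lindelof {f : ℂ → ℂ} (hf : DifferentiableOn ℂ f AnnS) (hi : InjOn f AnnS)
    (hb : ∀ z ∈ AnnS, ‖f z‖ < 2) (hne : ∀ z ∈ AnnS, f z ≠ 0)
    {σ : ℝ → ℂ} (hσ : ContinuousOn σ (Ioc 0 1)) {ζ : ℂ} (hζ : ‖ζ‖ = 1)
    (hσ1 : ∀ s ∈ Ioc (0:ℝ) 1, ‖σ s‖ < 1) (hlim : Tendsto σ (𝓝[>] 0) (𝓝 ζ))
    (hflim : Tendsto (fun s => f (σ s)) (𝓝[>] 0) (𝓝 0)) :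
    Tendsto (fun r : ℝ => f (r * ζ)) (𝓝[<] 1) (𝓝 0) := by
  have hζ0 : ζ ≠ 0 := by rw [← norm_pos_iff, hζ]; norm_num
  have hmap : ∀ z ∈ AnnS, z * ζ ∈ AnnS := by
    intro z hz
    refine ⟨?_, ?_⟩
    · rw [norm_mul, hζ, mul_one]; exact hz.1
    · rw [norm_mul, hζ, mul_one]; exact hz.2
  refine lindelof_one (f := fun z => f (z * ζ)) (σ := fun s => σ s * ζ⁻¹)
    (hf.comp (by fun_prop) hmap)
    (fun a ha b hb hab => mul_right_cancel₀ hζ0 (hi (hmap a ha) (hmap b hb) hab))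
    (fun z hz => hb _ (hmap z hz)) (fun z hz => hne _ (hmap z hz))
    (hσ.mul continuousOn_const) ?_ ?_ ?_
  · intro s hs
    rw [norm_mul, norm_inv, hζ, inv_one, mul_one]; exact hσ1 s hs
  · have := hlim.mul_const ζ⁻¹
    rwa [mul_inv_cancel₀ hζ0] at this
  · refine hflim.congr fun s => ?_
    simp only [inv_mul_cancel_right₀ hζ0]

theorem unbddComp_open {K : Set ℂ} (hK : IsCompact K) :
    IsOpen (unbddComp K) ∧ IsOpen (K ∪ unbddComp K)ᶜ := by
  have hO : IsOpen Kᶜ := hK.isClosed.isOpen_compl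
  constructor
  · rw [isOpen_iff_mem_nhds]
    rintro z ⟨hz, hz2⟩
    filter_upwards [(hO.connectedComponentIn (x := z)).mem_nhds (mem_connectedComponentIn hz)] with w hw
    refine ⟨connectedComponentIn_subset _ _ hw, ?_⟩
    rwa [← connectedComponentIn_eq hw]
  · rw [isOpen_iff_mem_nhds]
    intro z hz
    rw [compl_union] at hz
    filter_upwards [(hO.connectedComponentIn (x := z)).mem_nhds (mem_connectedComponentIn hz.1)] with w hw
    rw [compl_union]
    refine ⟨connectedComponentIn_subset _ _ hw, ?_⟩
    intro h
    refine hz.2 ⟨hz.1, ?_⟩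
    rw [connectedComponentIn_eq hw]
    exact h.2

open Classical in
noncomputable def psiMap (φ : ℂ → ℂ) : ℂ → ℂ := fun z => if z = 0 then 0 else (φ z)⁻¹

theorem psiMap_zero (φ : ℂ → ℂ) : psiMap φ 0 = 0 := by simp [psiMap]

theorem psiMap_ne (φ : ℂ → ℂ) {z : ℂ} (hz : z ≠ 0) : psiMap φ z = (φ z)⁻¹ := by simp [psiMap, hz]

theorem psiMap_image {U : Set ℂ} {φ : ℂ → ℂ} (h : IsNormalizedRiemannMap U φ) (hU0 : (0:ℂ) ∉ U) :
    psiMap φ '' ball 0 1 = {w | w = 0 ∨ w⁻¹ ∈ U} := by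
  obtain ⟨hd, hi, him, -⟩ := h
  ext w
  constructor
  · rintro ⟨z, hz, rfl⟩
    by_cases h0 : z = 0
    · left; rw [h0, psiMap_zero]
    · right
      rw [psiMap_ne φ h0, inv_inv, ← him]
      exact ⟨z, ⟨hz, h0⟩, rfl⟩
  · rintro (rfl | hw)
    · exact ⟨0, zero_mem_disk, psiMap_zero φ⟩
    · rw [← him] at hw
      obtain ⟨z, hz, hzw⟩ := hw
      exact ⟨z, hz.1, by rw [psiMap_ne φ hz.2, hzw, inv_inv]⟩

theorem psiMap_good {U : Set ℂ} {φ : ℂ → ℂ} (h : IsNormalizedRiemannMap U φ) (hU0 : (0:ℂ) ∉ U)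
    (hU1 : Uᶜ ⊆ ball 0 1) : GoodMap (psiMap φ) := by
  have himg := psiMap_image h hU0
  obtain ⟨hd, hi, him, c, hc, hlim⟩ := h
  have hne : ∀ z ∈ ball (0:ℂ) 1 \ {0}, φ z ≠ 0 := by
    intro z hz h0
    apply hU0; rw [← h0, ← him]; exact ⟨z, hz, rfl⟩
  have hc0 : (c:ℂ) ≠ 0 := by exact_mod_cast hc.ne'
  have hder : HasDerivAt (psiMap φ) ((c⁻¹ : ℝ) : ℂ) 0 := by
    rw [hasDerivAt_iff_tendsto_slope]
    push_cast
    refine (hlim.inv₀ hc0).congr' ?_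
    filter_upwards [self_mem_nhdsWithin] with z hz
    rw [slope_def_field, psiMap_zero, psiMap_ne φ hz]
    simp [div_eq_mul_inv, mul_comm]
  have hO : IsOpen (ball (0:ℂ) 1 \ {0}) := isOpen_ball.sdiff isClosed_singleton
  refine ⟨?_, ?_, psiMap_zero φ, ⟨c⁻¹, by positivity, hder.deriv⟩, ?_⟩
  · intro z hz
    by_cases h0 : z = 0
    · rw [h0]; exact hder.differentiableAt.differentiableWithinAt
    · refine DifferentiableAt.differentiableWithinAt ?_
      have h1 : DifferentiableAt ℂ (fun z => (φ z)⁻¹) z :=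
        (hd.differentiableAt (hO.mem_nhds ⟨hz, h0⟩)).inv (hne z ⟨hz, h0⟩)
      refine h1.congr_of_eventuallyEq ?_
      filter_upwards [isOpen_ne.mem_nhds h0] with w hw
      exact psiMap_ne φ hw
  · intro x hx y hy hxy
    by_cases h0 : x = 0
    · by_cases h1 : y = 0
      · rw [h0, h1]
      · rw [h0, psiMap_zero, psiMap_ne φ h1] at hxy
        exact absurd (inv_eq_zero.1 hxy.symm) (hne y ⟨hy, h1⟩)
    · by_cases h1 : y = 0
      · rw [h1, psiMap_zero, psiMap_ne φ h0] at hxy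
        exact absurd (inv_eq_zero.1 hxy) (hne x ⟨hx, h0⟩)
      · rw [psiMap_ne φ h0, psiMap_ne φ h1] at hxy
        exact hi ⟨hx, h0⟩ ⟨hy, h1⟩ (inv_injective hxy)
  · rw [himg]
    intro w hw
    by_cases h0 : w = 0
    · left; exact h0
    · right
      by_contra hcon
      have h1 := hU1 hcon
      rw [mem_ball, dist_zero_right, norm_inv] at h1
      rw [mem_ball, dist_zero_right] at hw
      have h2 : 0 < ‖w‖ := norm_pos_iff.2 h0
      have h3 : 1 < ‖w‖⁻¹ := (one_lt_inv₀ h2).2 hw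
      linarith

theorem goodMap_lower {ψ : ℂ → ℂ} (h : GoodMap ψ) {z : ℂ} (hz : z ∈ ball (0:ℂ) 1) (hz2 : 1 / 2 < ‖z‖) :
    1 / 2 < ‖ψ z‖ := by
  by_contra hcon
  push Not at hcon
  obtain ⟨k, -, -, hkm, hk, -⟩ := goodMap_compare (ψ0 := id) h differentiableOn_id rfl one_pos le_rfl
    (by simpa using h.2.2.2.2)
  have hm : ψ z ∈ ball (0:ℂ) 1 := by rw [mem_ball, dist_zero_right]; linarith
  obtain ⟨h1, h2⟩ := hk _ hm
  have h3 : k (ψ z) = z := h.2.1 (hkm hm) hz h1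
  rw [h3] at h2
  simp at h2
  linarith

theorem goodMap_not_univ {ψ : ℂ → ℂ} (h : GoodMap ψ) : ψ '' ball 0 1 ≠ univ := by
  intro hu
  obtain ⟨hO, g, hg, hgd⟩ := inv_holo isOpen_ball h.1 h.2.1
  rw [hu] at hgd
  have hgb : ∀ w, g w ∈ ball (0:ℂ) 1 ∧ ψ (g w) = w := by
    intro w
    have : w ∈ ψ '' ball 0 1 := by rw [hu]; trivial
    obtain ⟨z, hz, rfl⟩ := this
    rw [hg z hz]; exact ⟨hz, rfl⟩
  have hb : Bornology.IsBounded (range g) := by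
    refine (isBounded_ball (x := (0:ℂ)) (r := 1)).subset ?_
    rintro _ ⟨w, rfl⟩
    exact (hgb w).1
  have h1 := (differentiableOn_univ.1 hgd).apply_eq_apply_of_bounded hb 0 1
  have h2 := (hgb 0).2
  have h3 := (hgb 1).2
  rw [h1, h3] at h2
  exact one_ne_zero h2

/-- data along one ray -/
def RayData (φ : ℂ → ℂ) (γ σ : ℝ → ℂ) : Prop :=
  DifferentiableOn ℂ φ AnnS ∧ InjOn φ AnnS ∧ (∀ z ∈ AnnS, ‖φ z‖ < 2) ∧
  ContinuousOn σ (Ioc 0 1) ∧ (∀ s ∈ Ioc (0:ℝ) 1, σ s ∈ ball (0:ℂ) 1 \ {0} ∧ φ (σ s) = γ s) ∧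
  ContinuousOn γ (Icc 0 1) ∧ γ 0 = 0

theorem tail_est {η c δ : ℝ} (hη : 0 < η) (hη1 : η ≤ 1 / 4) (hc : 0 < c) (hδ : 0 < δ) :
    ∃ ε : ℝ, 0 < ε ∧ ε < c ∧ ∀ φ γ σ, RayData φ γ σ →
      (∀ z, z ≠ 0 → ‖z‖ ≤ 1 - η → c ≤ ‖φ z‖) → ∀ s' ∈ Ioc (0:ℝ) 1, (∀ s ∈ Ioc 0 s', ‖γ s‖ ≤ ε) →
      (∀ s ∈ Ioc 0 s', 1 - η < ‖σ s‖) ∧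
      ∀ s1 ∈ Ioc 0 s', ∀ s2 ∈ Ioc 0 s', ‖σ s1 - σ s2‖ ≤ δ + 2 * η := by
  obtain ⟨ε, hε, hεc, H⟩ := diam_lemma c δ hc hδ c hc
  refine ⟨ε, hε, hεc, fun φ γ σ hR hcore s' hs' hγ => ?_⟩
  obtain ⟨hd, hi, hb, hσ, hσ1, -, -⟩ := hR
  have hsub : Ioc 0 s' ⊆ Ioc (0:ℝ) 1 := Ioc_subset_Ioc_right hs'.2
  have h1 : ∀ s ∈ Ioc 0 s', 1 - η < ‖σ s‖ := by
    intro s hs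
    by_contra hcon
    push Not at hcon
    obtain ⟨h2, h3⟩ := hσ1 s (hsub hs)
    have := hcore (σ s) h2.2 hcon
    rw [h3] at this
    linarith [hγ s hs]
  refine ⟨h1, fun s1 hs1 s2 hs2 => ?_⟩
  have hlt : ∀ s ∈ Ioc 0 s', ‖σ s‖ < 1 := by
    intro s hs
    have := (hσ1 s (hsub hs)).1.1
    simpa using this
  have h2 := H φ hd hi hb (fun z hz => hcore z (by rintro rfl; simp at hz; linarith) (by rw [hz]; linarith))
    (σ '' Ioc 0 s') (isPreconnected_Ioc.image _ (hσ.mono hsub)) (by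
      rintro _ ⟨s, hs, rfl⟩
      refine ⟨by linarith [h1 s hs], hlt s hs, ?_⟩
      rw [(hσ1 s (hsub hs)).2]; exact hγ s hs) (σ s1) ⟨s1, hs1, rfl⟩ (σ s2) ⟨s2, hs2, rfl⟩
  have h3 : ∀ s ∈ Ioc 0 s', ‖σ s - σ s / (‖σ s‖ : ℂ)‖ ≤ η := by
    intro s hs
    have hp : 0 < ‖σ s‖ := by linarith [h1 s hs]
    have hpc : (‖σ s‖ : ℂ) ≠ 0 := by exact_mod_cast hp.ne'
    have e1 : σ s - σ s / (‖σ s‖ : ℂ) = (σ s / (‖σ s‖ : ℂ)) * ((‖σ s‖ - 1 : ℝ) : ℂ) := by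
      push_cast; field_simp
    rw [e1, norm_mul, norm_div, Complex.norm_real, norm_norm, div_self hp.ne', one_mul, Complex.norm_real,
      Real.norm_eq_abs, abs_le]
    constructor <;> linarith [h1 s hs, hlt s hs]
  have e2 : σ s1 - σ s2 = (σ s1 - σ s1 / (‖σ s1‖ : ℂ)) + (σ s1 / (‖σ s1‖ : ℂ) - σ s2 / (‖σ s2‖ : ℂ))
      - (σ s2 - σ s2 / (‖σ s2‖ : ℂ)) := by ring
  rw [e2]
  have e3 := norm_sub_le ((σ s1 - σ s1 / (‖σ s1‖ : ℂ)) + (σ s1 / (‖σ s1‖ : ℂ) - σ s2 / (‖σ s2‖ : ℂ)))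
    (σ s2 - σ s2 / (‖σ s2‖ : ℂ))
  have e4 := norm_add_le (σ s1 - σ s1 / (‖σ s1‖ : ℂ)) (σ s1 / (‖σ s1‖ : ℂ) - σ s2 / (‖σ s2‖ : ℂ))
  linarith [h3 s1 hs1, h3 s2 hs2]

theorem core_bound {φ : ℂ → ℂ} (hψ : DifferentiableOn ℂ (psiMap φ) (ball 0 1)) {η : ℝ} (hη : 0 < η)
    : ∃ M : ℝ, 0 < M ∧ ∀ z ∈ closedBall (0:ℂ) (1 - η), ‖psiMap φ z‖ ≤ M := by
  obtain ⟨M, hM⟩ := (isCompact_closedBall (0:ℂ) (1 - η)).exists_bound_of_continuousOn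
    (hψ.continuousOn.mono (closedBall_subset_ball (by linarith)))
  exact ⟨max M 1, by positivity, fun z hz => (hM z hz).trans (le_max_left _ _)⟩

theorem psiMap_bound {φ : ℂ → ℂ} {M : ℝ} (hM : 0 < M) {z : ℂ} (hz : z ≠ 0) (hφ : φ z ≠ 0)
    (h : ‖psiMap φ z‖ ≤ M) : M⁻¹ ≤ ‖φ z‖ := by
  rw [psiMap_ne φ hz, norm_inv] at h
  exact (inv_le_comm₀ hM (norm_pos_iff.2 hφ)).2 h

theorem gamma_small {γ : ℝ → ℂ} (hγ : ContinuousOn γ (Icc 0 1)) (h0 : γ 0 = 0) {ε : ℝ} (hε : 0 < ε) :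
    ∃ s' ∈ Ioc (0:ℝ) 1, ∀ s ∈ Icc 0 s', ‖γ s‖ ≤ ε := by
  have h1 := Metric.continuousOn_iff.1 hγ 0 (by simp) ε hε
  obtain ⟨δ, hδ, h2⟩ := h1
  refine ⟨min 1 (δ / 2), ⟨by positivity, min_le_left _ _⟩, fun s hs => ?_⟩
  have h3 := h2 s ⟨hs.1, hs.2.trans (min_le_left _ _)⟩ (by
    rw [Real.dist_eq, sub_zero, abs_of_nonneg hs.1]
    have := hs.2.trans (min_le_right _ _); linarith)
  rw [h0, dist_zero_right] at h3
  exact h3.le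

theorem single_ray {U L : Set ℂ} {φ : ℂ → ℂ} {b : ℂ} (h : IsNormalizedRiemannMap U φ) (hU0 : (0:ℂ) ∉ U)
    (hU1 : Uᶜ ⊆ ball 0 1) (hL : IsArcEnds L 0 b) (hLU : L ∩ Uᶜ = {0}) :
    ∃ γ σ : ℝ → ℂ, ∃ ζ : ℂ, RayData φ γ σ ∧ γ '' Icc 0 1 = L ∧ (∀ s ∈ Ioc (0:ℝ) 1, γ s ≠ 0) ∧
      ‖ζ‖ = 1 ∧ Tendsto σ (𝓝[>] 0) (𝓝 ζ) ∧
      closure ((ball 0 1 \ {0}) ∩ φ ⁻¹' (L \ {0})) ∩ sphere 0 1 = {ζ} ∧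
      Tendsto (fun r : ℝ => φ (r * ζ)) (𝓝[<] 1) (𝓝 0) := by
  have hψ := psiMap_good h hU0 hU1
  obtain ⟨hd, hi, him, -⟩ := h
  have hne : ∀ z ∈ ball (0:ℂ) 1 \ {0}, φ z ≠ 0 := by
    intro z hz h0
    apply hU0; rw [← h0, ← him]; exact ⟨z, hz, rfl⟩
  obtain ⟨γ, hγ, hγi, hγL, hγ0, -⟩ := hL
  have hO : IsOpen (ball (0:ℂ) 1 \ {0}) := isOpen_ball.sdiff isClosed_singleton
  obtain ⟨hUo, g, hg, hgd⟩ := inv_holo hO hd hi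
  rw [him] at hUo hgd
  have hγne : ∀ s ∈ Ioc (0:ℝ) 1, γ s ≠ 0 := by
    intro s hs h0
    have := hγi (Ioc_subset_Icc_self hs) (left_mem_Icc.2 zero_le_one) (h0.trans hγ0.symm)
    exact hs.1.ne' this
  have hγU : ∀ s ∈ Ioc (0:ℝ) 1, γ s ∈ U := by
    intro s hs
    by_contra hcon
    have h1 : γ s ∈ L ∩ Uᶜ := ⟨by rw [← hγL]; exact ⟨s, Ioc_subset_Icc_self hs, rfl⟩, hcon⟩
    rw [hLU] at h1
    exact hγne s hs h1
  set σ : ℝ → ℂ := fun s => g (γ s) with hσdef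
  have hσc : ContinuousOn σ (Ioc 0 1) := hgd.continuousOn.comp (hγ.mono Ioc_subset_Icc_self) hγU
  have hσ1 : ∀ s ∈ Ioc (0:ℝ) 1, σ s ∈ ball (0:ℂ) 1 \ {0} ∧ φ (σ s) = γ s := by
    intro s hs
    have := hγU s hs
    rw [← him] at this
    obtain ⟨z, hz, hzs⟩ := this
    simp only [hσdef]
    rw [← hzs, hg z hz]; exact ⟨hz, rfl⟩
  have hAsub : AnnS ⊆ ball (0:ℂ) 1 \ {0} := by
    intro z hz
    refine ⟨by simpa using hz.2, ?_⟩
    rintro rfl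
    have := hz.1; simp at this; linarith
  have hφb : ∀ z ∈ AnnS, ‖φ z‖ < 2 := by
    intro z hz
    have hz' := hAsub hz
    have h1 := goodMap_lower hψ hz'.1 hz.1
    rw [psiMap_ne φ hz'.2, norm_inv] at h1
    have h2 := (lt_inv_comm₀ (by norm_num) (norm_pos_iff.2 (hne z hz'))).1 h1
    norm_num at h2; exact h2
  have hR : RayData φ γ σ := ⟨hd.mono hAsub, hi.mono hAsub, hφb, hσc, hσ1, hγ, hγ0⟩
  have htail : ∀ η : ℝ, 0 < η → η ≤ 1 / 4 → ∃ s' ∈ Ioc (0:ℝ) 1, (∀ s ∈ Ioc 0 s', 1 - η < ‖σ s‖) ∧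
      ∀ s1 ∈ Ioc 0 s', ∀ s2 ∈ Ioc 0 s', ‖σ s1 - σ s2‖ ≤ 3 * η := by
    intro η hη hη1
    obtain ⟨M, hM, hM2⟩ := core_bound hψ.1 hη
    obtain ⟨ε, hε, hεc, H⟩ := tail_est hη hη1 (inv_pos.2 hM) hη
    obtain ⟨s', hs', hs2⟩ := gamma_small hγ hγ0 hε
    have := H φ γ σ hR (fun z hz hz2 => psiMap_bound hM hz
      (hne z ⟨by rw [mem_ball, dist_zero_right]; linarith, hz⟩) (hM2 z (by simpa using hz2))) s' hs'
      (fun s hs => hs2 s (Ioc_subset_Icc_self hs))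
    refine ⟨s', hs', this.1, fun s1 h1 s2 h2 => (this.2 s1 h1 s2 h2).trans (by linarith)⟩
  have hcauchy : Cauchy (map σ (𝓝[>] 0)) := by
    rw [Metric.cauchy_iff]
    refine ⟨inferInstance, fun ε hε => ?_⟩
    obtain ⟨s', hs', -, h2⟩ := htail (min (1 / 4) (ε / 6)) (by positivity) (min_le_left _ _)
    refine ⟨σ '' Ioc 0 s', image_mem_map (Ioc_mem_nhdsGT hs'.1), ?_⟩
    rintro _ ⟨s1, h3, rfl⟩ _ ⟨s2, h4, rfl⟩
    rw [dist_eq_norm]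
    have := h2 s1 h3 s2 h4
    have h5 := min_le_right (1 / 4) (ε / 6)
    linarith
  obtain ⟨ζ, hζ⟩ := CompleteSpace.complete hcauchy
  have hζ : Tendsto σ (𝓝[>] 0) (𝓝 ζ) := hζ
  have hζ1 : ‖ζ‖ = 1 := by
    refine le_antisymm ?_ ?_
    · refine le_of_tendsto hζ.norm ?_
      filter_upwards [Ioc_mem_nhdsGT (show (0:ℝ) < 1 by norm_num)] with s hs
      have := (hσ1 s hs).1.1
      rw [mem_ball, dist_zero_right] at this; exact this.le
    · by_contra hcon
      push Not at hcon
      set η := min (1 / 4) ((1 - ‖ζ‖) / 2) with hη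
      obtain ⟨s', hs', h1, -⟩ := htail η (lt_min (by norm_num) (by linarith)) (min_le_left _ _)
      have h2 : 1 - η ≤ ‖ζ‖ := by
        refine ge_of_tendsto hζ.norm ?_
        filter_upwards [Ioc_mem_nhdsGT hs'.1] with s hs
        exact (h1 s hs).le
      have h3 := min_le_right (1 / 4) ((1 - ‖ζ‖) / 2)
      linarith
  refine ⟨γ, σ, ζ, hR, hγL, hγne, hζ1, hζ, ?_, ?_⟩
  · have hP : (ball 0 1 \ {0}) ∩ φ ⁻¹' (L \ {0}) = σ '' Ioc 0 1 := by
      ext z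
      constructor
      · rintro ⟨hz, hz2, hz3⟩
        rw [← hγL] at hz2
        obtain ⟨s, hs, hse⟩ := hz2
        have hs0 : s ≠ 0 := by rintro rfl; exact hz3 (hse.symm.trans hγ0)
        have hs' : s ∈ Ioc (0:ℝ) 1 := ⟨lt_of_le_of_ne hs.1 hs0.symm, hs.2⟩
        exact ⟨s, hs', hi (hσ1 s hs').1 hz ((hσ1 s hs').2.trans hse)⟩
      · rintro ⟨s, hs, rfl⟩
        refine ⟨(hσ1 s hs).1, ?_, ?_⟩
        · rw [(hσ1 s hs).2, ← hγL]; exact ⟨s, Ioc_subset_Icc_self hs, rfl⟩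
        · rw [(hσ1 s hs).2]; exact hγne s hs
    rw [hP]
    have hIcc : Icc (0:ℝ) 1 \ {0} = Ioc 0 1 := by
      ext x; constructor
      · rintro ⟨h1, h2⟩; exact ⟨lt_of_le_of_ne h1.1 (Ne.symm h2), h1.2⟩
      · rintro h1; exact ⟨Ioc_subset_Icc_self h1, h1.1.ne'⟩
    have hext : ContinuousOn (Function.update σ 0 ζ) (Icc 0 1) := by
      rw [continuousOn_update_iff, hIcc]
      exact ⟨hσc, fun _ => hζ.mono_left (nhdsWithin_mono _ fun x hx => hx.1)⟩
    have hcl : closure (σ '' Ioc 0 1) ⊆ Function.update σ 0 ζ '' Icc 0 1 := by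
      refine closure_minimal ?_ (isCompact_Icc.image_of_continuousOn hext).isClosed
      rintro _ ⟨s, hs, rfl⟩
      exact ⟨s, Ioc_subset_Icc_self hs, Function.update_of_ne hs.1.ne' _ _⟩
    ext p
    constructor
    · rintro ⟨h1, h2⟩
      obtain ⟨s, hs, rfl⟩ := hcl h1
      by_cases hs0 : s = 0
      · rw [hs0, Function.update_self]; rfl
      · exfalso
        rw [Function.update_of_ne hs0] at h2
        have := (hσ1 s ⟨lt_of_le_of_ne hs.1 (Ne.symm hs0), hs.2⟩).1.1
        rw [mem_ball] at this
        rw [mem_sphere] at h2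
        linarith
    · intro h1
      rw [mem_singleton_iff] at h1
      rw [h1]
      refine ⟨mem_closure_of_tendsto hζ ?_, by simpa using hζ1⟩
      filter_upwards [Ioc_mem_nhdsGT (show (0:ℝ) < 1 by norm_num)] with s hs
      exact ⟨s, hs, rfl⟩
  · refine lindelof hR.1 hR.2.1 hR.2.2.1 (fun z hz => hne z (hAsub hz)) hσc hζ1
      (fun s hs => by simpa using (hσ1 s hs).1.1) hζ ?_
    have h1 : Tendsto γ (𝓝[>] 0) (𝓝 0) := by
      have := (hγ 0 (by simp)).mono_left (nhdsWithin_mono (0:ℝ) (Ioc_subset_Icc_self (a := (0:ℝ)) (b := 1)))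
      rw [hγ0] at this
      rwa [nhdsWithin_Ioc_eq_nhdsGT zero_lt_one] at this
    refine h1.congr' ?_
    filter_upwards [Ioc_mem_nhdsGT (show (0:ℝ) < 1 by norm_num)] with s hs
    exact (hσ1 s hs).2.symm


theorem ultra_compact {ι E : Type*} [TopologicalSpace E] (𝒰 : Ultrafilter ι) {K : Set E} (hK : IsCompact K)
    (f : ι → E) (hf : ∀ᶠ t in 𝒰, f t ∈ K) : ∃ x ∈ K, Tendsto f 𝒰 (𝓝 x) := by
  obtain ⟨x, hx, hx2⟩ := hK.ultrafilter_le_nhds (𝒰.map f) (le_principal_iff.2 hf)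
  exact ⟨x, hx, hx2⟩

theorem kernel_setup {Y : Set ℂ} (hY : IsCompact Y) (h0Y : (0:ℂ) ∈ Y) (h : ℂ → ℝ → ℂ)
    (hcont : ContinuousOn (fun p : ℂ × ℝ => h p.1 p.2) (Y ×ˢ Icc 0 1))
    (hfix : ∀ t ∈ Icc (0:ℝ) 1, h 0 t = 0) (φ : ℝ → ℂ → ℂ)
    (hb : ∀ t ∈ Icc (0:ℝ) 1, (unbddComp ((fun z => h z t) '' Y))ᶜ ⊆ ball 0 1)
    (hφ : ∀ t ∈ Icc (0:ℝ) 1, IsNormalizedRiemannMap (unbddComp ((fun z => h z t) '' Y)) (φ t))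
    {t0 : ℝ} (ht0 : t0 ∈ Icc (0:ℝ) 1) (𝒰 : Ultrafilter ℝ) (hU : (𝒰 : Filter ℝ) ≤ 𝓝[Icc 0 1] t0) :
    (∀ r < (1:ℝ), ∀ᶠ t in 𝒰, psiMap (φ t0) '' closedBall 0 r ⊆ psiMap (φ t) '' ball 0 1) ∧
    TendstoLocallyUniformlyOn (fun t => psiMap (φ t)) (psiMap (φ t0)) 𝒰 (ball 0 1) := by
  have hI : ∀ᶠ t in (𝒰 : Filter ℝ), t ∈ Icc (0:ℝ) 1 := hU eventually_mem_nhdsWithin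
  have htt : Tendsto (fun t : ℝ => t) 𝒰 (𝓝[Icc 0 1] t0) := hU
  have hKc : ∀ t ∈ Icc (0:ℝ) 1, IsCompact ((fun z => h z t) '' Y) := fun t ht =>
    hY.image_of_continuousOn (hcont.comp (f := fun z : ℂ => (z, t)) (by fun_prop) fun z hz => ⟨hz, ht⟩)
  have hU0 : ∀ t ∈ Icc (0:ℝ) 1, (0:ℂ) ∉ unbddComp ((fun z => h z t) '' Y) := fun t ht hh =>
    hh.1 ⟨0, h0Y, hfix t ht⟩
  have hV : ∀ t ∈ Icc (0:ℝ) 1, psiMap (φ t) '' ball 0 1 = _ := fun t ht => psiMap_image (hφ t ht) (hU0 t ht)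
  have hg : ∀ t ∈ Icc (0:ℝ) 1, GoodMap (psiMap (φ t)) := fun t ht => psiMap_good (hφ t ht) (hU0 t ht) (hb t ht)
  have hVo : ∀ t ∈ Icc (0:ℝ) 1, IsOpen (psiMap (φ t) '' ball 0 1) := fun t ht =>
    (inv_holo isOpen_ball (hg t ht).1 (hg t ht).2.1).1
  set W : ℝ → Set ℂ := fun t => {w | w ≠ 0 ∧ w⁻¹ ∈ ((fun z => h z t) '' Y ∪ unbddComp ((fun z => h z t) '' Y))ᶜ} with hW
  have hWo : ∀ t ∈ Icc (0:ℝ) 1, IsOpen (W t) := by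
    intro t ht
    rw [isOpen_iff_mem_nhds]
    rintro w ⟨hw, hw2⟩
    filter_upwards [isOpen_ne.mem_nhds hw, (continuousAt_inv₀ hw).preimage_mem_nhds
      ((unbddComp_open (hKc t ht)).2.mem_nhds hw2)] with v h1 h2
    exact ⟨h1, h2⟩
  have hdisj : ∀ t ∈ Icc (0:ℝ) 1, Disjoint (psiMap (φ t) '' ball 0 1) (W t) := by
    intro t ht
    rw [hV t ht, Set.disjoint_left]
    rintro w (hw | hw) ⟨h1, h2⟩
    · exact h1 hw
    · exact h2 (Or.inr hw)
  have hCV : ∀ t ∈ Icc (0:ℝ) 1, ∀ w, ∀ y ∈ Y, w * h y t = 1 → w ∉ psiMap (φ t) '' ball 0 1 := by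
    intro t ht w y hy hw
    rw [hV t ht]
    rintro (h1 | h1)
    · rw [h1, zero_mul] at hw; exact zero_ne_one hw
    · rw [inv_eq_of_mul_eq_one_right hw] at h1
      exact h1.1 ⟨y, hy, rfl⟩
  have hcov : ∀ t ∈ Icc (0:ℝ) 1, ∀ w, w ∉ psiMap (φ t) '' ball 0 1 → w ∉ W t → ∃ y ∈ Y, w * h y t = 1 := by
    intro t ht w h1 h2
    rw [hV t ht] at h1
    rw [Set.mem_ofPred_eq, not_or] at h1
    by_cases h3 : w⁻¹ ∈ (fun z => h z t) '' Y
    · obtain ⟨y, hy, h4⟩ := h3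
      refine ⟨y, hy, ?_⟩
      simp only at h4
      rw [h4, mul_inv_cancel₀ h1.1]
    · exact absurd ⟨h1.1, fun h4 => h4.elim h3 h1.2⟩ h2
  have hhc : ∀ (y : ℝ → ℂ) (y0 : ℂ), y0 ∈ Y → (∀ᶠ t in 𝒰, y t ∈ Y) → Tendsto y 𝒰 (𝓝 y0) →
      Tendsto (fun t => h (y t) t) 𝒰 (𝓝 (h y0 t0)) := by
    intro y y0 hy0 hy hlim
    have h1 := hcont (y0, t0) ⟨hy0, ht0⟩
    refine Tendsto.comp (g := fun p : ℂ × ℝ => h p.1 p.2) (f := fun t => (y t, t)) h1 ?_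
    refine tendsto_nhdsWithin_iff.2 ⟨hlim.prodMk_nhds (htt.mono_right nhdsWithin_le_nhds), ?_⟩
    filter_upwards [hy, hI] with t h2 h3
    exact ⟨h2, h3⟩
  have hii : ∀ r < (1:ℝ), ∀ᶠ t in 𝒰, psiMap (φ t0) '' closedBall 0 r ⊆ psiMap (φ t) '' ball 0 1 := by
    intro r hr
    by_cases hr0 : r < 0
    · refine Eventually.of_forall fun t => ?_
      rw [closedBall_eq_empty.2 hr0]; simp
    push Not at hr0
    have hco : ContinuousOn (psiMap (φ t0)) (closedBall 0 r) :=
      (hg t0 ht0).1.continuousOn.mono (closedBall_subset_ball hr)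
    have hSc : IsCompact (psiMap (φ t0) '' closedBall 0 r) :=
      (isCompact_closedBall _ _).image_of_continuousOn hco
    have hSp : IsPreconnected (psiMap (φ t0) '' closedBall 0 r) :=
      (convex_closedBall _ _).isPreconnected.image _ hco
    have hS0 : (0:ℂ) ∈ psiMap (φ t0) '' closedBall 0 r := ⟨0, by simpa using hr0, psiMap_zero _⟩
    have key : ∀ᶠ t in 𝒰, ∀ w ∈ psiMap (φ t0) '' closedBall 0 r, ∀ y ∈ Y, w * h y t ≠ 1 := by
      by_contra hcon
      rw [← Ultrafilter.eventually_not] at hcon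
      have hch : ∀ t, ∃ p : ℂ × ℂ, (¬ ∀ w ∈ psiMap (φ t0) '' closedBall 0 r, ∀ y ∈ Y, w * h y t ≠ 1) →
          p ∈ (psiMap (φ t0) '' closedBall 0 r) ×ˢ Y ∧ p.1 * h p.2 t = 1 := by
        intro t
        by_cases hc : ∀ w ∈ psiMap (φ t0) '' closedBall 0 r, ∀ y ∈ Y, w * h y t ≠ 1
        · exact ⟨0, fun hh => absurd hc hh⟩
        · have hc' := hc
          push Not at hc'
          obtain ⟨w, hw, y, hy, e⟩ := hc'
          exact ⟨(w, y), fun _ => ⟨⟨hw, hy⟩, e⟩⟩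
      choose p hp using hch
      have hp2 : ∀ᶠ t in 𝒰, p t ∈ (psiMap (φ t0) '' closedBall 0 r) ×ˢ Y ∧ (p t).1 * h (p t).2 t = 1 :=
        hcon.mono fun t ht => hp t ht
      obtain ⟨x, hx, hlim⟩ := ultra_compact 𝒰 (hSc.prod hY) p (hp2.mono fun t h => h.1)
      have l1 : Tendsto (fun t => (p t).1) 𝒰 (𝓝 x.1) := (continuous_fst.tendsto x).comp hlim
      have l2 : Tendsto (fun t => (p t).2) 𝒰 (𝓝 x.2) := (continuous_snd.tendsto x).comp hlim
      have l3 := l1.mul (hhc _ _ hx.2 (hp2.mono fun t h => h.1.2) l2)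
      have l4 : Tendsto (fun t => (p t).1 * h (p t).2 t) 𝒰 (𝓝 1) :=
        tendsto_const_nhds.congr' (hp2.mono fun t h => h.2.symm)
      exact hCV t0 ht0 _ _ hx.2 (tendsto_nhds_unique l3 l4)
        (image_mono (closedBall_subset_ball hr) hx.1)
    filter_upwards [key, hI] with t h1 h2
    refine hSp.subset_left_of_subset_union (hVo t h2) (hWo t h2) (hdisj t h2) ?_
      ⟨0, hS0, ⟨0, by simp, psiMap_zero _⟩⟩
    intro w hw
    by_contra h3
    rw [mem_union, not_or] at h3
    obtain ⟨y, hy, e⟩ := hcov t h2 w h3.1 h3.2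
    exact h1 w hw y hy e
  have hiii : ∀ v, v ∉ psiMap (φ t0) '' ball 0 1 → v ∉ W t0 →
      ∃ w : ℝ → ℂ, Tendsto w 𝒰 (𝓝 v) ∧ ∀ᶠ t in 𝒰, w t ∉ psiMap (φ t) '' ball 0 1 := by
    intro v h1 h2
    obtain ⟨y, hy, e⟩ := hcov t0 ht0 v h1 h2
    have l := hhc (fun _ => y) y hy (Eventually.of_forall fun _ => hy) tendsto_const_nhds
    have hne : h y t0 ≠ 0 := right_ne_zero_of_mul_eq_one e
    refine ⟨fun t => (h y t)⁻¹, ?_, ?_⟩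
    · have := l.inv₀ hne
      rwa [inv_eq_of_mul_eq_one_left e] at this
    · filter_upwards [l.eventually_ne hne, hI] with t h3 h4
      exact hCV t h4 _ y hy (inv_mul_cancel₀ h3)
  refine ⟨hii, ?_⟩
  obtain ⟨v, hv1, hv2⟩ : ∃ v, v ∉ psiMap (φ t0) '' ball 0 1 ∧ v ∉ W t0 := by
    by_contra hcon
    push Not at hcon
    refine goodMap_not_univ (hg t0 ht0) (univ_subset_iff.1 ?_)
    refine isPreconnected_univ.subset_left_of_subset_union (hVo t0 ht0) (hWo t0 ht0) (hdisj t0 ht0) ?_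
      ⟨0, mem_univ _, ⟨0, by simp, psiMap_zero _⟩⟩
    intro w _
    by_cases h1 : w ∈ psiMap (φ t0) '' ball 0 1
    · exact Or.inl h1
    · exact Or.inr (hcon w h1)
  obtain ⟨a, ha1, ha2⟩ := hiii v hv1 hv2
  refine kernel_ultra 𝒰 (fun t => psiMap (φ t)) (psiMap (φ t0)) (hI.mono hg) (hg t0 ht0) a (‖v‖ + 1) ?_ hii
    (W t0) (hWo t0 ht0) (hdisj t0 ht0) hiii
  have := ha1.norm.eventually (gt_mem_nhds (lt_add_one ‖v‖))
  filter_upwards [ha2, this] with t h1 h2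
  exact ⟨h1, h2.le⟩


theorem first_exit {γ : ℝ → ℂ} (hγ : ContinuousOn γ (Icc 0 1)) (h0 : γ 0 = 0) {ε : ℝ} (hε : 0 < ε)
    {u : ℝ} (hu : u ∈ Icc (0:ℝ) 1) (hu2 : ε ≤ ‖γ u‖) :
    ∃ s ∈ Ioc (0:ℝ) 1, ‖γ s‖ = ε ∧ ∀ s' ∈ Ioc 0 s, ‖γ s'‖ ≤ ε := by
  have ivt : ∀ v ∈ Icc (0:ℝ) 1, ε ≤ ‖γ v‖ → ∃ s ∈ Icc 0 v, ‖γ s‖ = ε := by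
    intro v hv hv2
    have := intermediate_value_Icc hv.1 (hγ.norm.mono (Icc_subset_Icc_right hv.2))
    obtain ⟨s, hs, e⟩ := this (show ε ∈ Icc ‖γ 0‖ ‖γ v‖ from ⟨by rw [h0, norm_zero]; exact hε.le, hv2⟩)
    exact ⟨s, hs, e⟩
  have hc : IsCompact (Icc (0:ℝ) 1 ∩ (fun s => ‖γ s‖) ⁻¹' {ε}) :=
    isCompact_Icc.of_isClosed_subset (hγ.norm.preimage_isClosed_of_isClosed isClosed_Icc isClosed_singleton)
      inter_subset_left
  obtain ⟨s, hs, e⟩ := ivt u hu hu2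
  obtain ⟨m, hm, hm2⟩ := hc.exists_isLeast ⟨s, ⟨hs.1, hs.2.trans hu.2⟩, e⟩
  have hme : ‖γ m‖ = ε := hm.2
  have hm0 : m ≠ 0 := by
    rintro rfl
    rw [h0, norm_zero] at hme; exact hε.ne hme
  refine ⟨m, ⟨lt_of_le_of_ne hm.1.1 hm0.symm, hm.1.2⟩, hme, fun s' hs' => ?_⟩
  by_contra hcon
  push Not at hcon
  obtain ⟨v, hv, e⟩ := ivt s' ⟨hs'.1.le, hs'.2.trans hm.1.2⟩ hcon.le
  have h1 : m ≤ v := hm2 ⟨⟨hv.1, hv.2.trans (hs'.2.trans hm.1.2)⟩, e⟩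
  have h2 : s' = m := le_antisymm hs'.2 (h1.trans hv.2)
  rw [h2, hme] at hcon
  exact lt_irrefl _ hcon

theorem ray_lim {σ : ℝ → ℂ} {ζ : ℂ} (h : Tendsto σ (𝓝[>] 0) (𝓝 ζ)) {s' B : ℝ} (hs' : 0 < s')
    (hb : ∀ s1 ∈ Ioc 0 s', ∀ s2 ∈ Ioc 0 s', ‖σ s1 - σ s2‖ ≤ B) {s : ℝ} (hs : s ∈ Ioc 0 s') :
    ‖σ s - ζ‖ ≤ B := by
  have l : Tendsto (fun x => ‖σ s - σ x‖) (𝓝[>] 0) (𝓝 ‖σ s - ζ‖) := (tendsto_const_nhds.sub h).norm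
  refine le_of_tendsto l ?_
  filter_upwards [Ioc_mem_nhdsGT hs'] with x hx
  exact hb s hs x hx

theorem angle_cont {t0 : ℝ} (𝒰 : Ultrafilter ℝ) (φ : ℝ → ℂ → ℂ) (γ σ : ℝ → ℝ → ℂ) (ζ : ℝ → ℂ) (L : ℝ → Set ℂ)
    (G : ℝ → Prop) (hG : ∀ᶠ t in 𝒰, G t) (hG0 : G t0)
    (hg : ∀ t, G t → GoodMap (psiMap (φ t)))
    (hne : ∀ t, G t → ∀ z ∈ ball (0:ℂ) 1 \ {0}, φ t z ≠ 0)
    (hii : ∀ r < (1:ℝ), ∀ᶠ t in 𝒰, psiMap (φ t0) '' closedBall 0 r ⊆ psiMap (φ t) '' ball 0 1)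
    (hl : TendstoLocallyUniformlyOn (fun t => psiMap (φ t)) (psiMap (φ t0)) 𝒰 (ball 0 1))
    (hR : ∀ t, G t → RayData (φ t) (γ t) (σ t) ∧ γ t '' Icc 0 1 = L t ∧ (∀ s ∈ Ioc (0:ℝ) 1, γ t s ≠ 0) ∧
      Tendsto (σ t) (𝓝[>] 0) (𝓝 (ζ t)))
    (hH : ∀ ε > 0, ∀ᶠ t in 𝒰, (∀ x ∈ L t, ∃ y ∈ L t0, dist x y < ε) ∧ (∀ y ∈ L t0, ∃ x ∈ L t, dist x y < ε)) :
    Tendsto ζ 𝒰 (𝓝 (ζ t0)) := by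
  rw [Metric.tendsto_nhds]
  intro e he
  obtain ⟨η, hη, hη4, hηe⟩ : ∃ η : ℝ, 0 < η ∧ η ≤ 1 / 4 ∧ η ≤ e / 12 :=
    ⟨min (1 / 4) (e / 12), by positivity, min_le_left _ _, min_le_right _ _⟩
  obtain ⟨M, hM, hM2⟩ := core_bound (hg t0 hG0).1 hη
  have hcoreb : ∀ᶠ t in 𝒰, ∀ z ∈ closedBall (0:ℂ) (1 - η), ‖psiMap (φ t) z‖ ≤ M + 1 := by
    have h1 := (tendstoLocallyUniformlyOn_iff_forall_isCompact isOpen_ball).1 hl (closedBall (0:ℂ) (1 - η))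
      (closedBall_subset_ball (by linarith)) (isCompact_closedBall _ _)
    filter_upwards [Metric.tendstoUniformlyOn_iff.1 h1 1 one_pos] with t ht z hz
    have h2 := ht z hz
    rw [dist_comm, dist_eq_norm] at h2
    have h3 := hM2 z hz
    have h4 := norm_le_norm_add_norm_sub' (psiMap (φ t) z) (psiMap (φ t0) z)
    linarith
  have hM1 : 0 < M + 1 := by linarith
  obtain ⟨ε1, hε1, -, H⟩ := tail_est hη hη4 (inv_pos.2 hM1) hη
  have hcore : ∀ t, G t → (∀ z ∈ closedBall (0:ℂ) (1 - η), ‖psiMap (φ t) z‖ ≤ M + 1) →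
      ∀ z, z ≠ 0 → ‖z‖ ≤ 1 - η → (M + 1)⁻¹ ≤ ‖φ t z‖ := fun t ht h1 z hz hz2 =>
    psiMap_bound hM1 hz (hne t ht z ⟨by rw [mem_ball, dist_zero_right]; linarith, hz⟩)
      (h1 z (by simpa using hz2))
  obtain ⟨hR0, hL0, hγ0, hζ0⟩ := hR t0 hG0
  have hγc := hR0.2.2.2.2.2.1
  have hγz := hR0.2.2.2.2.2.2
  have hσ0 := hR0.2.2.2.2.1
  obtain ⟨s1, hs1, hs1γ⟩ := gamma_small hγc hγz hε1
  have T0 := H _ _ _ hR0 (hcore t0 hG0 fun z hz => (hM2 z hz).trans (by linarith)) s1 hs1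
    (fun s hs => hs1γ s (Ioc_subset_Icc_self hs))
  obtain ⟨sm, hsm, hmin⟩ := (isCompact_Icc (a := s1) (b := 1)).exists_isMinOn (nonempty_Icc.2 hs1.2)
    (hγc.norm.mono (Icc_subset_Icc_left hs1.1.le))
  have hm0 : 0 < ‖γ t0 sm‖ := norm_pos_iff.2 (hγ0 sm ⟨hs1.1.trans_le hsm.1, hsm.2⟩)
  set m := ‖γ t0 sm‖ with hm
  obtain ⟨ε2, hε2, hε2m, hε21⟩ : ∃ ε2 : ℝ, 0 < ε2 ∧ ε2 < m ∧ ε2 ≤ ε1 :=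
    ⟨min (m / 2) ε1, by positivity, (min_le_left _ _).trans_lt (by linarith), min_le_right _ _⟩
  have hex : ∀ᶠ t in 𝒰, ∃ s ∈ Ioc (0:ℝ) 1, ‖γ t s‖ = ε2 ∧ ∀ s' ∈ Ioc 0 s, ‖γ t s'‖ ≤ ε2 := by
    filter_upwards [hG, hH (m - ε2) (by linarith)] with t ht h1
    obtain ⟨hRt, hLt, -, -⟩ := hR t ht
    obtain ⟨x, hx, hd⟩ := h1.2 (γ t0 1) (by rw [← hL0]; exact ⟨1, by simp, rfl⟩)
    rw [← hLt] at hx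
    obtain ⟨u, hu, rfl⟩ := hx
    refine first_exit hRt.2.2.2.2.2.1 hRt.2.2.2.2.2.2 hε2 hu ?_
    have h2 : m ≤ ‖γ t0 1‖ := hmin (show (1:ℝ) ∈ Icc s1 1 from ⟨hs1.2, le_rfl⟩)
    rw [dist_comm, dist_eq_norm] at hd
    have h3 := norm_le_norm_add_norm_sub' (γ t0 1) (γ t u)
    linarith
  have hch : ∀ t, ∃ s : ℝ, (∃ s ∈ Ioc (0:ℝ) 1, ‖γ t s‖ = ε2 ∧ ∀ s' ∈ Ioc 0 s, ‖γ t s'‖ ≤ ε2) →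
      s ∈ Ioc (0:ℝ) 1 ∧ ‖γ t s‖ = ε2 ∧ ∀ s' ∈ Ioc 0 s, ‖γ t s'‖ ≤ ε2 := by
    intro t
    by_cases hc : ∃ s ∈ Ioc (0:ℝ) 1, ‖γ t s‖ = ε2 ∧ ∀ s' ∈ Ioc 0 s, ‖γ t s'‖ ≤ ε2
    · obtain ⟨s, hs⟩ := hc
      exact ⟨s, fun _ => hs⟩
    · exact ⟨0, fun hh => absurd hh hc⟩
  choose S hS' using hch
  have hS := hex.mono fun t ht => hS' t ht
  obtain ⟨q, hqs, hq⟩ := ultra_compact 𝒰 (isCompact_sphere (0:ℂ) ε2) (fun t => γ t (S t))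
    (hS.mono fun t ht => by simpa using ht.2.1)
  have hqn : ‖q‖ = ε2 := by simpa using hqs
  have hLcl : IsClosed (L t0) := by
    rw [← hL0]; exact (isCompact_Icc.image_of_continuousOn hγc).isClosed
  have hqL : q ∈ L t0 := by
    rw [← hLcl.closure_eq, Metric.mem_closure_iff]
    intro ε hε
    have h1 := (Metric.tendsto_nhds.1 hq (ε / 2) (by linarith)).and
      ((hH (ε / 2) (by linarith)).and (hG.and hS))
    obtain ⟨t, h2, h3, h4, h5⟩ := h1.exists
    obtain ⟨y, hy, hd⟩ := h3.1 (γ t (S t)) (by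
      rw [← (hR t h4).2.1]; exact ⟨_, Ioc_subset_Icc_self h5.1, rfl⟩)
    refine ⟨y, hy, ?_⟩
    have := dist_triangle q (γ t (S t)) y
    rw [dist_comm] at h2
    linarith
  rw [← hL0] at hqL
  obtain ⟨s, hs, hsq⟩ := hqL
  have hs0 : 0 < s := by
    refine lt_of_le_of_ne hs.1 ?_
    rintro rfl
    rw [hγz] at hsq
    rw [← hsq, norm_zero] at hqn
    exact hε2.ne hqn
  have hss1 : s < s1 := by
    by_contra hcon
    push Not at hcon
    have : m ≤ ‖γ t0 s‖ := hmin (show s ∈ Icc s1 1 from ⟨hcon, hs.2⟩)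
    rw [hsq, hqn] at this
    linarith
  have B0 := ray_lim hζ0 hs1.1 T0.2 (s := s) ⟨hs0, hss1.le⟩
  have hσs := hσ0 s ⟨hs0, hs.2⟩
  have hpts : Tendsto (fun t => σ t (S t)) 𝒰 (𝓝 (σ t0 s)) := by
    refine kernel_pts 𝒰 (fun t => psiMap (φ t)) (psiMap (φ t0)) (hG.mono hg) (hg t0 hG0) hii hl _ _ hσs.1.1 ?_ ?_
    · filter_upwards [hG, hS] with t h1 h2
      exact ((hR t h1).1.2.2.2.2.1 _ h2.1).1.1
    · rw [psiMap_ne _ hσs.1.2, hσs.2, hsq]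
      have hq0 : q ≠ 0 := by rw [← norm_pos_iff, hqn]; exact hε2
      refine (hq.inv₀ hq0).congr' ?_
      filter_upwards [hG, hS] with t h1 h2
      have h3 := (hR t h1).1.2.2.2.2.1 _ h2.1
      rw [psiMap_ne _ h3.1.2, h3.2]
  filter_upwards [hG, hS, hcoreb, Metric.tendsto_nhds.1 hpts (e / 4) (by linarith)] with t h1 h2 h3 h4
  obtain ⟨hRt, -, -, hζt⟩ := hR t h1
  have T := H _ _ _ hRt (hcore t h1 h3) (S t) h2.1 (fun x hx => (h2.2.2 x hx).trans hε21)
  have B := ray_lim hζt h2.1.1 T.2 (s := S t) ⟨h2.1.1, le_rfl⟩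
  rw [← dist_eq_norm] at B B0
  have t1 := dist_triangle4 (ζ t) (σ t (S t)) (σ t0 s) (ζ t0)
  rw [dist_comm (ζ t) (σ t (S t))] at t1
  linarith


theorem continuous_angle_function
    (X : Set ℂ) (hXne : X.Nonempty) (hXcpt : IsCompact X) (hXconn : IsConnected X)
    (hXns : IsConnected Xᶜ) (h0 : (0:ℂ) ∈ frontier X) (hXb : X ⊆ Metric.ball 0 1)
    (h : ℂ → ℝ → ℂ)
    (hcont : ContinuousOn (fun p : ℂ × ℝ => h p.1 p.2) (frontier X ×ˢ Set.Icc 0 1))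
    (hinj : ∀ t ∈ Set.Icc (0:ℝ) 1, Set.InjOn (fun z => h z t) (frontier X))
    (hid : ∀ z ∈ frontier X, h z 0 = z)
    (hfix : ∀ t ∈ Set.Icc (0:ℝ) 1, h 0 t = 0)
    (hXtb : ∀ t ∈ Set.Icc (0:ℝ) 1, XtSet h X t ⊆ Metric.ball 0 1)
    (hdiam : ∀ t ∈ Set.Icc (0:ℝ) 1, Metric.diam (XtSet h X t) < 1)
    (φ : ℝ → ℂ → ℂ)
    (hφ : ∀ t ∈ Set.Icc (0:ℝ) 1,
      IsNormalizedRiemannMap (unbddComp ((fun z => h z t) '' frontier X)) (φ t))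
    (L : ℝ → Set ℂ)
    (hL : ∀ t ∈ Set.Icc (0:ℝ) 1,
      (∃ b : ℂ, IsArcEnds (L t) 0 b) ∧ L t ∩ XtSet h X t = {0})
    (hLcont : ∀ t₀ ∈ Set.Icc (0:ℝ) 1, ∀ ε > (0:ℝ), ∃ δ > (0:ℝ), ∀ t ∈ Set.Icc (0:ℝ) 1,
      |t - t₀| < δ → Metric.hausdorffDist (L t) (L t₀) < ε) :
    ∃ α : ℝ → ℝ,
      (∀ t ∈ Set.Icc (0:ℝ) 1,
        closure ((Metric.ball 0 1 \ {0}) ∩ (φ t) ⁻¹' (L t \ {0})) ∩ Metric.sphere 0 1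
          = {Complex.exp ((α t : ℂ) * Complex.I)}) ∧
      ContinuousOn (fun t : ℝ => Complex.exp ((α t : ℂ) * Complex.I)) (Set.Icc 0 1) ∧
      (∀ t ∈ Set.Icc (0:ℝ) 1,
        Filter.Tendsto (fun r : ℝ => φ t ((r : ℂ) * Complex.exp ((α t : ℂ) * Complex.I)))
          (𝓝[<] 1) (𝓝 0)) := by

  have hY : IsCompact (frontier X) :=
    hXcpt.of_isClosed_subset isClosed_frontier hXcpt.isClosed.frontier_subset
  have hU0 : ∀ t ∈ Icc (0:ℝ) 1, (0:ℂ) ∉ unbddComp ((fun z => h z t) '' frontier X) := fun t ht hh =>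
    hh.1 ⟨0, h0, hfix t ht⟩
  have hray : ∀ t, ∃ γ σ : ℝ → ℂ, ∃ ζ : ℂ, t ∈ Icc (0:ℝ) 1 →
      RayData (φ t) γ σ ∧ γ '' Icc 0 1 = L t ∧ (∀ s ∈ Ioc (0:ℝ) 1, γ s ≠ 0) ∧
      ‖ζ‖ = 1 ∧ Tendsto σ (𝓝[>] 0) (𝓝 ζ) ∧
      closure ((ball 0 1 \ {0}) ∩ (φ t) ⁻¹' (L t \ {0})) ∩ sphere 0 1 = {ζ} ∧
      Tendsto (fun r : ℝ => φ t (r * ζ)) (𝓝[<] 1) (𝓝 0) := by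
    intro t
    by_cases ht : t ∈ Icc (0:ℝ) 1
    · obtain ⟨⟨b, hb⟩, hLX⟩ := hL t ht
      obtain ⟨γ, σ, ζ, H⟩ := single_ray (hφ t ht) (hU0 t ht) (hXtb t ht) hb hLX
      exact ⟨γ, σ, ζ, fun _ => H⟩
    · exact ⟨0, 0, 0, fun hh => absurd hh ht⟩
  choose γ σ ζ hray using hray
  have hexp : ∀ t ∈ Icc (0:ℝ) 1, Complex.exp (((ζ t).arg : ℂ) * Complex.I) = ζ t := by
    intro t ht
    have h1 := Complex.norm_mul_exp_arg_mul_I (ζ t)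
    rw [(hray t ht).2.2.2.1] at h1
    simpa using h1
  have hLc : ∀ t ∈ Icc (0:ℝ) 1, (L t).Nonempty ∧ Bornology.IsBounded (L t) := by
    intro t ht
    obtain ⟨hR, hLt, -⟩ := hray t ht
    rw [← hLt]
    exact ⟨⟨_, 0, by simp, rfl⟩, (isCompact_Icc.image_of_continuousOn hR.2.2.2.2.2.1).isBounded⟩
  refine ⟨fun t => (ζ t).arg, fun t ht => ?_, ?_, fun t ht => ?_⟩
  · rw [hexp t ht]; exact (hray t ht).2.2.2.2.2.1
  · have hc : ContinuousOn ζ (Icc 0 1) := by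
      intro t0 ht0
      rw [ContinuousWithinAt, tendsto_iff_ultrafilter]
      intro 𝒰 hU
      obtain ⟨hii, hl⟩ := kernel_setup hY h0 h hcont hfix φ hXtb hφ ht0 𝒰 hU
      have hI : ∀ᶠ t in (𝒰 : Filter ℝ), t ∈ Icc (0:ℝ) 1 := hU eventually_mem_nhdsWithin
      refine angle_cont 𝒰 φ γ σ ζ L (fun t => t ∈ Icc (0:ℝ) 1) hI ht0
        (fun t ht => psiMap_good (hφ t ht) (hU0 t ht) (hXtb t ht)) ?_ hii hl
        (fun t ht => ⟨(hray t ht).1, (hray t ht).2.1, (hray t ht).2.2.1, (hray t ht).2.2.2.2.1⟩) ?_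
      · intro t ht z hz hz0
        apply hU0 t ht
        rw [← hz0, ← (hφ t ht).2.2.1]
        exact ⟨z, hz, rfl⟩
      · intro ε hε
        obtain ⟨δ, hδ, H⟩ := hLcont t0 ht0 ε hε
        have hn : ∀ᶠ t in (𝒰 : Filter ℝ), |t - t0| < δ := by
          have : ball t0 δ ∈ 𝓝[Icc 0 1] t0 := mem_nhdsWithin_of_mem_nhds (ball_mem_nhds _ hδ)
          filter_upwards [hU this] with t ht
          rwa [mem_ball, Real.dist_eq] at ht
        filter_upwards [hI, hn] with t h1 h2
        have h3 := H t h1 h2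
        have h4 := hausdorffEDist_ne_top_of_nonempty_of_bounded (hLc t h1).1 (hLc t0 ht0).1 (hLc t h1).2
          (hLc t0 ht0).2
        refine ⟨fun x hx => exists_dist_lt_of_hausdorffDist_lt hx h3 h4, fun y hy => ?_⟩
        obtain ⟨x, hx, hd⟩ := exists_dist_lt_of_hausdorffDist_lt' hy h3 h4
        exact ⟨x, hx, hd⟩
    exact hc.congr fun t ht => hexp t ht
  · rw [hexp t ht]; exact (hray t ht).2.2.2.2.2.2
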